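/- Independence of the difference order (Corollary 4.3): Let p, q, r ∈ (0,∞], α₁, α₂ ∈ ℝ, α₃ ≥ 0, σ₁ ∈ (0,∞], σ₂ = p, let {t_k} ∈ X^{α₃}_{α,σ,p} be a p-admissible weight sequence, and let l ∈ ℕ with l > α₂. Then for every integer l' > l the quasi-norms of B̃^{l'}_{p,q,r}(ℝⁿ,{t_k}) and B̃^{l}_{p,q,r}(ℝⁿ,{t_k}) are equivalent: there exist C₁, C₂ > 0 with C₁·‖φ | B̃^{l}_{p,q,r}(ℝⁿ,{t_k})‖ ≤ ‖φ | B̃^{l'}_{p,q,r}(ℝⁿ,{t_k})‖ ≤ C₂·‖φ | B̃^{l}_{p,q,r}(ℝⁿ,{t_k})‖ for all φ ∈ L_r^{loc}(ℝⁿ); in particular the two spaces coincide. -/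

import Mathlib

open MeasureTheory ENNReal Filter
open scoped Classical

noncomputable section

/-- `ℓ_q` quasinorm of a family of extended nonnegative reals (supremum when `q = ∞`). -/
def lqNorm {ι : Type*} (q : ℝ≥0∞) (c : ι → ℝ≥0∞) : ℝ≥0∞ :=
  if q = ∞ then ⨆ i, c i else (∑' i, c i ^ q.toReal) ^ (1 / q.toReal)

/-- `L_p` quasinorm of an `ℝ≥0∞`-valued function (essential supremum when `p = ∞`). -/
def lpNormE {α : Type*} [MeasurableSpace α] (p : ℝ≥0∞) (μ : Measure α) (f : α → ℝ≥0∞) : ℝ≥0∞ :=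
  if p = ∞ then essSup f μ else (∫⁻ x, f x ^ p.toReal ∂μ) ^ (1 / p.toReal)

abbrev Rn (n : ℕ) := Fin n → ℝ

/-- Open cube centred at `x` of half-side `s` (i.e. `x + s·Iⁿ`). -/
def openCube {n : ℕ} (x : Rn n) (s : ℝ) : Set (Rn n) := {y | ∀ i, |y i - x i| < s}

/-- Open axis-parallel cube with lower corner `c` and side `s`. -/
def cubeAt {n : ℕ} (c : Rn n) (s : ℝ) : Set (Rn n) := {x | ∀ i, c i < x i ∧ x i < c i + s}

/-- Open dyadic cube `Q^n_{k,m}` of side `2^{-k}`. -/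
def dyadicCube (n k : ℕ) (m : Fin n → ℤ) : Set (Rn n) :=
  {x | ∀ i, (m i : ℝ) / 2 ^ k < x i ∧ x i < ((m i : ℝ) + 1) / 2 ^ k}

/-- Half-open dyadic cube `Q̃^n_{k,m}`. -/
def dyadicCubeHalf (n k : ℕ) (m : Fin n → ℤ) : Set (Rn n) :=
  {x | ∀ i, (m i : ℝ) / 2 ^ k ≤ x i ∧ x i < ((m i : ℝ) + 1) / 2 ^ k}

def dyadicCenter (n k : ℕ) (m : Fin n → ℤ) : Rn n := fun i => ((m i : ℝ) + 1 / 2) / 2 ^ k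

/-- The concentric dilate `c·Q^n_{k,m}` of a dyadic cube. -/
def dilatedCube (n k : ℕ) (m : Fin n → ℤ) (c : ℝ) : Set (Rn n) :=
  openCube (dyadicCenter n k m) (c / 2 ^ (k + 1))

def euclNorm {d : ℕ} (y : Rn d) : ℝ := Real.sqrt (∑ i, y i ^ 2)

/-- The difference `Δ^l(h)g(x)`. -/
def diffl {n : ℕ} (l : ℕ) (h : Rn n) (g : Rn n → ℝ) (x : Rn n) : ℝ :=
  ∑ j ∈ Finset.range (l + 1), ((l.choose j : ℝ) * (-1 : ℝ) ^ (l + j)) * g (x + (j : ℝ) • h)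

/-- The difference `Δ^l(h,Ω)g(x)`, vanishing unless the segment `[x, x + l·h]` lies in `Ω`. -/
def difflOn {n : ℕ} (l : ℕ) (Ω : Set (Rn n)) (h : Rn n) (g : Rn n → ℝ) (x : Rn n) : ℝ :=
  if ∀ τ ∈ Set.Icc (0 : ℝ) 1, x + (τ * l) • h ∈ Ω then diffl l h g x else 0

/-- `δ^l_r(Q)g`, where `s` is the side length of the cube `Q`. -/
def deltaE (n l : ℕ) (r : ℝ≥0∞) (s : ℝ) (Q : Set (Rn n)) (g : Rn n → ℝ) : ℝ≥0∞ :=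
  ENNReal.ofReal s ^ (-(2 * (n : ℝ)) / r.toReal) *
    eLpNorm (fun hx : Rn n × Rn n => diffl l hx.1 g hx.2) r
      ((volume.restrict (openCube (0 : Rn n) s)).prod (volume.restrict Q))

/-- `δ^l_r(Q,Ω)g`, where `s` is the side length of the cube `Q`. -/
def deltaEOn (n l : ℕ) (r : ℝ≥0∞) (s : ℝ) (Q Ω : Set (Rn n)) (g : Rn n → ℝ) : ℝ≥0∞ :=
  ENNReal.ofReal s ^ (-(2 * (n : ℝ)) / r.toReal) *
    eLpNorm (fun hx : Rn n × Rn n => difflOn l Ω hx.1 g hx.2) r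
      ((volume.restrict (openCube (0 : Rn n) s)).prod (volume.restrict Q))

/-- `Δ̄^l_r(s)g(x)`. -/
def barDelta (n l : ℕ) (r : ℝ≥0∞) (s : ℝ) (g : Rn n → ℝ) (x : Rn n) : ℝ≥0∞ :=
  ENNReal.ofReal s ^ (-(n : ℝ) / r.toReal) *
    eLpNorm (fun h : Rn n => diffl l h g x) r (volume.restrict (openCube (0 : Rn n) s))

/-- Membership in `L_r^{loc}(ℝⁿ)`. -/
def MemLrLoc (n : ℕ) (r : ℝ≥0∞) (φ : Rn n → ℝ) : Prop :=
  Measurable φ ∧ ∀ K : Set (Rn n), IsCompact K → eLpNorm φ r (volume.restrict K) < ∞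

def IsWeight {n : ℕ} (w : Rn n → ℝ) : Prop := Measurable w ∧ ∀ x, 0 < w x

/-- A `p`-admissible weight sequence. -/
def pAdmissible (n : ℕ) (p : ℝ≥0∞) (t : ℕ → Rn n → ℝ) : Prop :=
  ∀ k, IsWeight (t k) ∧ MemLrLoc n p (t k)

/-- The multiple sequence `t_{k,m} = ‖t_k‖_{L_p(Q^n_{k,m})}` associated with a weight sequence. -/
def tkm (n : ℕ) (p : ℝ≥0∞) (t : ℕ → Rn n → ℝ) (k : ℕ) (m : Fin n → ℤ) : ℝ≥0∞ :=
  eLpNorm (t k) p (volume.restrict (dyadicCube n k m))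

/-- The weight `t̄_k` built from a multiple sequence `T`. -/
def tbarOf (n : ℕ) (p : ℝ≥0∞) (T : ℕ → (Fin n → ℤ) → ℝ≥0∞) (k : ℕ) (x : Rn n) : ℝ≥0∞ :=
  (2 : ℝ≥0∞) ^ (((k * n : ℕ) : ℝ) / p.toReal) *
    ∑' m : Fin n → ℤ, (dyadicCubeHalf n k m).indicator (fun _ => T k m) x

/-- `(2^{kn} ∫_Q f^e)^{1/e}`, with the essential supremum modification for `e = ∞`. -/
def avgNorm (n k : ℕ) (e : ℝ≥0∞) (Q : Set (Rn n)) (f : Rn n → ℝ≥0∞) : ℝ≥0∞ :=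
  if e = ∞ then essSup f (volume.restrict Q)
  else ((2 : ℝ≥0∞) ^ (k * n) * ∫⁻ x in Q, f x ^ e.toReal) ^ (1 / e.toReal)

/-- Conditions (2.14)–(2.16) of the class `X^{α₃}_{α,σ,p}`, expressed for a multiple
sequence `T`. -/
def MemXseq (n : ℕ) (α₁ α₂ α₃ : ℝ) (σ₁ σ₂ p : ℝ≥0∞) (T : ℕ → (Fin n → ℤ) → ℝ≥0∞) : Prop :=
  (∃ C₁ : ℝ≥0∞, 0 < C₁ ∧ C₁ < ∞ ∧ ∀ k j : ℕ, k ≤ j → ∀ m : Fin n → ℤ,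
    avgNorm n k p (dyadicCube n k m) (tbarOf n p T k) *
      avgNorm n k σ₁ (dyadicCube n k m) (fun x => (tbarOf n p T j x)⁻¹) ≤
      C₁ * (2 : ℝ≥0∞) ^ (α₁ * ((k : ℝ) - (j : ℝ)))) ∧
  (∃ C₂ : ℝ≥0∞, 0 < C₂ ∧ C₂ < ∞ ∧ ∀ k j : ℕ, k ≤ j → ∀ m : Fin n → ℤ,
    (avgNorm n k p (dyadicCube n k m) (tbarOf n p T k))⁻¹ *
      avgNorm n k σ₂ (dyadicCube n k m) (tbarOf n p T j) ≤
      C₂ * (2 : ℝ≥0∞) ^ (α₂ * ((j : ℝ) - (k : ℝ)))) ∧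
  (∀ k : ℕ, ∀ m m' : Fin n → ℤ, (∀ i, |m i - m' i| ≤ 1) →
    0 < T k m ∧ T k m ≤ (2 : ℝ≥0∞) ^ (α₃ : ℝ) * T k m')

/-- The weighted class `X^{α₃}_{α,σ,p}` of weight sequences. -/
def MemX (n : ℕ) (α₁ α₂ α₃ : ℝ) (σ₁ σ₂ p : ℝ≥0∞) (t : ℕ → Rn n → ℝ) : Prop :=
  pAdmissible n p t ∧ MemXseq n α₁ α₂ α₃ σ₁ σ₂ p (tkm n p t)

/-- Quasinorm of `B̃^l_{p,q,r}(ℝⁿ, T)` with an `ℝ≥0∞`-valued weight sequence `T`. -/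
def tildeBnormE (n l : ℕ) (p q r : ℝ≥0∞) (T : ℕ → Rn n → ℝ≥0∞) (φ : Rn n → ℝ) : ℝ≥0∞ :=
  lqNorm q (fun k : ℕ =>
    lpNormE p volume (fun x =>
      T (k + 1) x *
        deltaE n l r ((2 : ℝ) ^ (1 - ((k : ℤ) + 1))) (openCube x ((2 : ℝ) ^ (-((k : ℤ) + 1)))) φ)) +
  lpNormE p volume (fun x => T 0 x * eLpNorm φ r (volume.restrict (openCube x 1)))

/-- Quasinorm of `B̃^l_{p,q,r}(ℝⁿ, {t_k})`. -/
def tildeBnorm (n l : ℕ) (p q r : ℝ≥0∞) (t : ℕ → Rn n → ℝ) (φ : Rn n → ℝ) : ℝ≥0∞ :=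
  tildeBnormE n l p q r (fun k x => ENNReal.ofReal (t k x)) φ

/-- Membership in `B̃^l_{p,q,r}(ℝⁿ, {t_k})`. -/
def MemTildeB (n l : ℕ) (p q r : ℝ≥0∞) (t : ℕ → Rn n → ℝ) (φ : Rn n → ℝ) : Prop :=
  MemLrLoc n r φ ∧ tildeBnorm n l p q r t φ < ∞

/-- Quasinorm of `B̄^l_{p,q,r}(ℝⁿ, {t_k})`. -/
def barBnorm (n l : ℕ) (p q r : ℝ≥0∞) (t : ℕ → Rn n → ℝ) (φ : Rn n → ℝ) : ℝ≥0∞ :=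
  lqNorm q (fun k : ℕ =>
    lpNormE p volume (fun x =>
      ENNReal.ofReal (t (k + 1) x) * barDelta n l r ((2 : ℝ) ^ (-((k : ℤ) + 1))) φ x)) +
  lpNormE p volume (fun x => ENNReal.ofReal (t 0 x) * eLpNorm φ r (volume.restrict (openCube x 1)))

/-- Membership in `B̄^l_{p,q,r}(ℝⁿ, {t_k})`. -/
def MemBarB (n l : ℕ) (p q r : ℝ≥0∞) (t : ℕ → Rn n → ℝ) (φ : Rn n → ℝ) : Prop :=
  MemLrLoc n r φ ∧ barBnorm n l p q r t φ < ∞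

/-- The class `A^{loc}_∞`. -/
def MemAlocInfty (n : ℕ) (w : Rn n → ℝ) : Prop :=
  ∃ α : ℝ, α ∈ Set.Ioo (0 : ℝ) 1 ∧ ∃ M : ℝ≥0∞, M < ∞ ∧
    ∀ (c : Rn n) (s : ℝ), 0 < s → s ≤ 1 →
      ∀ F : Set (Rn n), F ⊆ cubeAt c s → MeasurableSet F →
        ENNReal.ofReal α * volume (cubeAt c s) ≤ volume F →
        (∫⁻ x in cubeAt c s, ENNReal.ofReal (w x)) ≤ M * ∫⁻ x in F, ENNReal.ofReal (w x)

/-- The class `A^{loc}_1`. -/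
def MemAloc1 (n : ℕ) (w : Rn n → ℝ) : Prop :=
  ∃ C : ℝ≥0∞, C < ∞ ∧ ∀ (c : Rn n) (s : ℝ), 0 < s → s ≤ 1 →
    ∀ᵐ x ∂volume.restrict (cubeAt c s),
      (∫⁻ y in cubeAt c s, ENNReal.ofReal (w y)) ≤ C * volume (cubeAt c s) * ENNReal.ofReal (w x)

/-- The class `A^{loc}_{p₀}` for `p₀ > 1`. -/
def MemAlocGt (n : ℕ) (p₀ : ℝ) (w : Rn n → ℝ) : Prop :=
  ∃ C : ℝ≥0∞, C < ∞ ∧ ∀ (c : Rn n) (s : ℝ), 0 < s → s ≤ 1 →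
    ((volume (cubeAt c s))⁻¹ * ∫⁻ y in cubeAt c s, ENNReal.ofReal (w y)) *
      ((volume (cubeAt c s))⁻¹ *
        ∫⁻ y in cubeAt c s, ENNReal.ofReal (w y) ^ (-(1 : ℝ) / (p₀ - 1))) ^ (p₀ - 1) ≤ C

/-- The class `A^{loc}_{p₀}` for `p₀ ∈ [1,∞)`. -/
def MemAlocP (n : ℕ) (p₀ : ℝ) (w : Rn n → ℝ) : Prop :=
  if p₀ = 1 then MemAloc1 n w else MemAlocGt n p₀ w

/-- The class `{}^{loc}Y^{α₃}_{α₁,α₂}` of weight sequences of variable smoothness. -/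
def MemLocY (n : ℕ) (α₁ α₂ α₃ : ℝ) (s : ℕ → Rn n → ℝ) : Prop :=
  (∀ k, IsWeight (s k)) ∧
  (∃ C : ℝ, 0 < C ∧ ∀ j k : ℕ, j ≤ k → ∀ x : Rn n,
    C⁻¹ * (2 : ℝ) ^ (α₁ * ((k : ℝ) - (j : ℝ))) ≤ s k x / s j x ∧
      s k x / s j x ≤ C * (2 : ℝ) ^ (α₂ * ((k : ℝ) - (j : ℝ)))) ∧
  (∀ k : ℕ, ∀ x y : Rn n, euclNorm (x - y) ≤ (2 : ℝ) ^ (-(k : ℤ)) →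
    s k x ≤ (2 : ℝ) ^ α₃ * s k y)

/-- The set `Ξ^{d,n}_{k,m} = Q^n_{k,m} × (2^{-k}B^d ∖ 2^{-k-1}B^d) ⊂ ℝ^{n+d}`. -/
def Xi (n d k : ℕ) (m : Fin n → ℤ) : Set (Rn (n + d)) :=
  {z | (fun i => z (Fin.castAdd d i)) ∈ dyadicCube n k m ∧
       euclNorm (fun i : Fin d => z (Fin.natAdd n i)) < (2 : ℝ) ^ (-(k : ℤ)) ∧
       (2 : ℝ) ^ (-(k : ℤ) - 1) ≤ euclNorm (fun i : Fin d => z (Fin.natAdd n i))}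

/-- The multiple sequence `γ̂_{k,m} = ‖γ‖_{L_p(Ξ^{d,n}_{k,m})}` generated by a weight `γ`. -/
def gammaHat (n d : ℕ) (p : ℝ≥0∞) (γ : Rn (n + d) → ℝ) (k : ℕ) (m : Fin n → ℤ) : ℝ≥0∞ :=
  eLpNorm γ p (volume.restrict (Xi n d k m))

def delta1Good (n d : ℕ) (p : ℝ≥0∞) (γ : Rn (n + d) → ℝ) (δ : ℝ) : Prop :=
  ∃ C : ℝ≥0∞, C < ∞ ∧ ∀ k j : ℕ, k ≤ j → ∀ m : Fin n → ℤ,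
    (∑' m' : {m' : Fin n → ℤ // dyadicCube n j m' ⊆ dyadicCube n k m},
        gammaHat n d p γ j m'.1 ^ p.toReal) ≤
      C * (2 : ℝ≥0∞) ^ ((((k : ℝ) - (j : ℝ)) * (d : ℝ)) * δ) * gammaHat n d p γ k m ^ p.toReal

/-- `δ₁(γ,n,d)`. -/
def delta1 (n d : ℕ) (p : ℝ≥0∞) (γ : Rn (n + d) → ℝ) : ℝ :=
  sSup {δ : ℝ | 0 < δ ∧ delta1Good n d p γ δ}

def delta2Good (n d : ℕ) (p : ℝ≥0∞) (γ : Rn (n + d) → ℝ) (δ : ℝ) : Prop :=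
  ∃ C : ℝ≥0∞, C < ∞ ∧ ∀ k j : ℕ, k ≤ j → ∀ m : Fin n → ℤ,
    ∀ G : Set (Fin n → ℤ), (∀ m' ∈ G, dyadicCube n j m' ⊆ dyadicCube n k m) →
      (∑' m' : G, gammaHat n d p γ j m'.1 ^ p.toReal) ≤
        C * (volume (⋃ m' ∈ G, dyadicCube n j m') / volume (dyadicCube n k m)) ^ δ *
          ∑' m' : {m' : Fin n → ℤ // dyadicCube n j m' ⊆ dyadicCube n k m},
            gammaHat n d p γ j m'.1 ^ p.toReal

/-- `δ₂(γ,n,d)`. -/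
def delta2 (n d : ℕ) (p : ℝ≥0∞) (γ : Rn (n + d) → ℝ) : ℝ :=
  sSup {δ : ℝ | 0 < δ ∧ delta2Good n d p γ δ}

/-- The cardinal B-spline of degree `deg` with knots `0, 1, …, deg + 1`. -/
def cardB : ℕ → ℝ → ℝ
  | 0, x => if 0 ≤ x ∧ x < 1 then 1 else 0
  | (d + 1), x => (x / (d + 1)) * cardB d x + (((d : ℝ) + 2 - x) / (d + 1)) * cardB d (x - 1)

/-- The tensor-product B-spline `N^{deg}_{k,m}` on `ℝⁿ`. -/
def Bspl (n deg k : ℕ) (m : Fin n → ℤ) (x : Rn n) : ℝ :=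
  ∏ i, cardB deg (2 ^ k * x i - (m i : ℝ))

/-- The spline `Σ_m β_m N^{deg}_{k,m}`. -/
def splineSum (n deg k : ℕ) (β : (Fin n → ℤ) → ℝ) (x : Rn n) : ℝ :=
  ∑' m, β m * Bspl n deg k m x

/-- A dyadic spline of degree `deg` (an element of `Σ^{deg} = ⋃_k Σ^{deg}_k`). -/
def IsSplineFn (n deg : ℕ) (S : Rn n → ℝ) : Prop :=
  ∃ (k : ℕ) (β : (Fin n → ℤ) → ℝ), S = splineSum n deg k β

/-- The weighted best spline approximation `s_k(φ)` by splines of degree `deg`. -/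
def sApprox (n deg : ℕ) (p r : ℝ≥0∞) (T : ℕ → (Fin n → ℤ) → ℝ≥0∞) (φ : Rn n → ℝ) (k : ℕ) :
    ℝ≥0∞ :=
  ⨅ β : (Fin n → ℤ) → ℝ,
    lqNorm p (fun m => T k m *
      eLpNorm (fun x => φ x - splineSum n deg k β x) r (volume.restrict (dyadicCube n k m)))

/-- `s_j(φ)` for `j ∈ {-1, 0, 1, 2, …}`, including the term `s_{-1}`. -/
def sApproxZ (n deg : ℕ) (p r : ℝ≥0∞) (T : ℕ → (Fin n → ℤ) → ℝ≥0∞) (φ : Rn n → ℝ) (j : ℤ) :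
    ℝ≥0∞ :=
  if j < 0 then
    lqNorm p (fun m => T 0 m * eLpNorm φ r (volume.restrict (dyadicCube n 0 m)))
  else sApprox n deg p r T φ j.toNat

/-- Local best polynomial approximation `E_l(φ,Q)_r` by polynomials of total degree `< l`. -/
def bestApproxE (n l : ℕ) (r : ℝ≥0∞) (φ : Rn n → ℝ) (Q : Set (Rn n)) : ℝ≥0∞ :=
  ⨅ P : {P : MvPolynomial (Fin n) ℝ // P.totalDegree < l},
    eLpNorm (fun x => φ x - MvPolynomial.eval x P.1) r (volume.restrict Q)

/-- The modulus of continuity `ω_l(φ,Q)_r`. -/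
def modulusE (n l : ℕ) (r : ℝ≥0∞) (φ : Rn n → ℝ) (Q : Set (Rn n)) : ℝ≥0∞ :=
  ⨆ h : Rn n, eLpNorm (difflOn l Q h φ) r (volume : Measure (Rn n))

def partialDeriv {N : ℕ} (i : Fin N) (ψ : Rn N → ℝ) : Rn N → ℝ :=
  fun x => fderiv ℝ ψ x (Pi.single i 1)

def iterPD {N : ℕ} : List (Fin N) → (Rn N → ℝ) → Rn N → ℝ
  | [], ψ => ψ
  | i :: L, ψ => partialDeriv i (iterPD L ψ)

def multiIdxList {N : ℕ} (α : Fin N → ℕ) : List (Fin N) :=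
  (List.finRange N).foldr (fun i L => List.replicate (α i) i ++ L) []

/-- Iterated partial derivative `D^α`. -/
def multiDeriv {N : ℕ} (α : Fin N → ℕ) (ψ : Rn N → ℝ) : Rn N → ℝ :=
  iterPD (multiIdxList α) ψ

/-- `g` is the weak (Sobolev) derivative `D^α f`. -/
def IsWeakDeriv {N : ℕ} (α : Fin N → ℕ) (f g : Rn N → ℝ) : Prop :=
  ∀ ψ : Rn N → ℝ, ContDiff ℝ (⊤ : ℕ∞) ψ → HasCompactSupport ψ →
    ∫ x, f x * multiDeriv α ψ x = (-1 : ℝ) ^ (∑ i, α i) * ∫ x, g x * ψ x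

/-- The weighted Sobolev norm `Σ_{|α| ≤ l} ‖γ · D^α f‖_{L_p}` computed from a system `D` of
weak derivatives. -/
def sobNorm (N : ℕ) (p : ℝ≥0∞) (l : ℕ) (γ : Rn N → ℝ) (D : (Fin N → ℕ) → Rn N → ℝ) : ℝ≥0∞ :=
  ∑' α : Fin N → ℕ,
    if (∑ i, α i) ≤ l then eLpNorm (fun x => γ x * D α x) p volume else 0

/-- Membership in the weighted Sobolev space `W^l_p(ℝ^N, γ)`, witnessed by the system `D`
of weak derivatives of `f`. -/
def MemW (N : ℕ) (p : ℝ≥0∞) (l : ℕ) (γ : Rn N → ℝ) (f : Rn N → ℝ)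
    (D : (Fin N → ℕ) → Rn N → ℝ) : Prop :=
  MeasureTheory.LocallyIntegrable f volume ∧ D 0 = f ∧
    (∀ α : Fin N → ℕ, (∑ i, α i) ≤ l →
      MeasureTheory.LocallyIntegrable (D α) volume ∧ IsWeakDeriv α f (D α)) ∧
    sobNorm N p l γ D < ∞

/-- `φ` is the trace of `f` on the plane `y = 0`. -/
def IsTraceSob {n d : ℕ} (f : Rn (n + d) → ℝ) (φ : Rn n → ℝ) : Prop :=
  ∃ f' : Rn (n + d) → ℝ, f' =ᵐ[volume] f ∧
    ∀ (c : Rn n) (s : ℝ), 0 < s →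
      Filter.Tendsto (fun y : Rn d => ∫ x in cubeAt c s, |f' (Fin.append x y) - φ x|)
        (nhds 0) (nhds 0)

/-- The weight sequence `γ_k(x) = 2^{k(l+n/p)} Σ_m χ_{Q̃^n_{k,m}}(x) γ̂_{k,m}`. -/
def gammaSeq (n d : ℕ) (p : ℝ≥0∞) (l : ℕ) (γ : Rn (n + d) → ℝ) (k : ℕ) (x : Rn n) : ℝ≥0∞ :=
  (2 : ℝ≥0∞) ^ ((k : ℝ) * ((l : ℝ) + (n : ℝ) / p.toReal)) *
    ∑' m : Fin n → ℤ, (dyadicCubeHalf n k m).indicator (fun _ => gammaHat n d p γ k m) x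

/-- Conjugate exponent in `ℝ≥0∞`. -/
def conjE (e : ℝ≥0∞) : ℝ≥0∞ := (1 - e⁻¹)⁻¹

/-- The exponent `p_θ`. -/
def pTheta (p θ : ℝ≥0∞) : ℝ≥0∞ := if θ = ∞ ∧ p = ∞ then 1 else p / θ

/-! ### Algebra of differences -/

lemma diffl_eq_fwdDiff {n : ℕ} (l : ℕ) (h : Rn n) (g : Rn n → ℝ) (x : Rn n) :
    diffl l h g x = (fwdDiff h)^[l] g x := by
  rw [fwdDiff_iter_eq_sum_shift]
  unfold diffl
  refine Finset.sum_congr rfl fun j hj => ?_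
  have hj' : j ≤ l := Nat.lt_succ_iff.mp (Finset.mem_range.mp hj)
  have : (-1 : ℝ) ^ (l + j) = (-1) ^ (l - j) := by
    obtain ⟨d, rfl⟩ := Nat.exists_eq_add_of_le hj'
    rw [Nat.add_sub_cancel_left, show j + d + j = 2 * j + d by ring, pow_add, pow_mul]
    simp
  rw [this]
  simp only [zsmul_eq_mul, Nat.cast_smul_eq_nsmul]
  push_cast
  ring

lemma diffl_succ {n : ℕ} (l : ℕ) (h : Rn n) (g : Rn n → ℝ) (x : Rn n) :
    diffl (l + 1) h g x = diffl l h g (x + h) - diffl l h g x := by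
  simp only [diffl_eq_fwdDiff, Function.iterate_succ_apply', fwdDiff]

/-- The shift operator on expressions depending on `(g, h, x)`. -/
def shiftOp (n : ℕ) : Module.End ℝ ((Rn n → ℝ) → Rn n → Rn n → ℝ) where
  toFun F := fun g h x => F g h (x + h)
  map_add' _ _ := rfl
  map_smul' _ _ := rfl

lemma shiftOp_pow {n : ℕ} (i : ℕ) (F : (Rn n → ℝ) → Rn n → Rn n → ℝ) :
    ((shiftOp n) ^ i) F = fun g h x => F g h (x + (i : ℝ) • h) := by
  induction i with
  | zero => simp
  | succ i ih =>
    rw [pow_succ', Module.End.mul_apply, ih]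
    funext g h x
    simp only [shiftOp, LinearMap.coe_mk, AddHom.coe_mk]
    congr 1
    push_cast
    module

lemma aeval_d {n : ℕ} (l : ℕ) :
    (fun (g : Rn n → ℝ) (h x : Rn n) => diffl l h g x) =
      Polynomial.aeval (shiftOp n) ((Polynomial.X - 1 : Polynomial ℝ) ^ l)
        (fun g _ x => g x) := by
  induction l with
  | zero => funext g h x; simp [diffl]
  | succ l ih =>
    rw [pow_succ', map_mul, Module.End.mul_apply, ← ih]
    funext g h x
    rw [diffl_succ]
    simp [shiftOp]

lemma aeval_u {n : ℕ} (l : ℕ) :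
    (fun (g : Rn n → ℝ) (h x : Rn n) => diffl l ((2 : ℝ) • h) g x) =
      Polynomial.aeval (shiftOp n) ((Polynomial.X ^ 2 - 1 : Polynomial ℝ) ^ l)
        (fun g _ x => g x) := by
  induction l with
  | zero => funext g h x; simp [diffl]
  | succ l ih =>
    rw [pow_succ', map_mul, Module.End.mul_apply, ← ih]
    funext g h x
    rw [diffl_succ]
    simp only [map_sub, map_pow, Polynomial.aeval_X, map_one, LinearMap.sub_apply, shiftOp_pow,
      Module.End.one_apply, Pi.sub_apply]
    norm_num

lemma marchaud_poly (l : ℕ) : ∃ P : Polynomial ℝ,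
    (Polynomial.X - 1 : Polynomial ℝ) ^ l =
      Polynomial.C ((2 : ℝ)⁻¹ ^ l) * (Polynomial.X ^ 2 - 1) ^ l +
        P * (Polynomial.X - 1) ^ (l + 1) := by
  have h1 : (Polynomial.X - Polynomial.C 1 : Polynomial ℝ) ∣
      1 - (Polynomial.C (2 : ℝ)⁻¹ * (Polynomial.X + 1)) ^ l := by
    rw [Polynomial.dvd_iff_isRoot]
    simp only [Polynomial.IsRoot, Polynomial.eval_sub, Polynomial.eval_one, Polynomial.eval_pow,
      Polynomial.eval_mul, Polynomial.eval_C, Polynomial.eval_add, Polynomial.eval_X]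
    norm_num
  obtain ⟨P, hP⟩ := h1
  refine ⟨P, ?_⟩
  have h2 : P * (Polynomial.X - 1 : Polynomial ℝ) ^ (l + 1) =
      (Polynomial.X - 1) ^ l * ((Polynomial.X - Polynomial.C 1) * P) := by
    rw [map_one]; ring
  rw [h2, ← hP, mul_pow, show (Polynomial.X ^ 2 - 1 : Polynomial ℝ) =
    (Polynomial.X - 1) * (Polynomial.X + 1) by ring, mul_pow, Polynomial.C_pow]
  ring

/-- The Marchaud identity. -/
lemma marchaud (n l : ℕ) : ∃ (d : ℕ) (c : ℕ → ℝ), ∀ (g : Rn n → ℝ) (h x : Rn n),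
    diffl l h g x - (2 : ℝ)⁻¹ ^ l * diffl l ((2 : ℝ) • h) g x =
      ∑ i ∈ Finset.range d, c i * diffl (l + 1) h g (x + (i : ℝ) • h) := by
  obtain ⟨P, hP⟩ := marchaud_poly l
  refine ⟨P.natDegree + 1, P.coeff, fun g h x => ?_⟩
  have h1 := congrArg (fun Q => Polynomial.aeval (shiftOp n) Q (fun g _ x => g x) g h x) hP
  have hd := congrFun (congrFun (congrFun (aeval_d (n := n) l) g) h) x
  have hu := congrFun (congrFun (congrFun (aeval_u (n := n) l) g) h) x
  simp only [map_add, map_mul, LinearMap.add_apply, Module.End.mul_apply, Pi.add_apply,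
    Polynomial.aeval_C, Module.algebraMap_end_apply, Pi.smul_apply, smul_eq_mul] at h1
  rw [← hd, ← hu, ← aeval_d, Polynomial.aeval_eq_sum_range] at h1
  rw [h1]
  simp [Finset.sum_apply, shiftOp_pow]

/-- Kemperman's identity, specialised to the increments `H, …, H, v`. -/
lemma kemperman {n : ℕ} (M : ℕ) (w : ℕ → Rn n) (g : Rn n → ℝ) (x : Rn n) :
    ∑ S ∈ (Finset.range M).powerset, (-1 : ℝ) ^ S.card *
        diffl M (-∑ i ∈ S, ((i : ℝ) + 1)⁻¹ • w i) g (x + ∑ i ∈ S, w i) =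
      (-1) ^ M * ∑ S ∈ (Finset.range M).powerset, (-1 : ℝ) ^ S.card * g (x + ∑ i ∈ S, w i) := by
  unfold diffl
  simp_rw [Finset.mul_sum]
  rw [Finset.sum_comm, Finset.sum_range_succ']
  rw [Finset.sum_eq_zero, zero_add]
  · refine Finset.sum_congr rfl fun S _ => ?_
    simp
    ring
  · intro j hj
    have hj' := Finset.mem_range.mp hj
    have hins : insert j ((Finset.range M).erase j) = Finset.range M :=
      Finset.insert_erase hj
    rw [← hins, Finset.sum_powerset_insert (Finset.notMem_erase _ _), ← Finset.sum_add_distrib]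
    refine Finset.sum_eq_zero fun S hS => ?_
    have hjS : j ∉ S := fun h => Finset.notMem_erase j _ (Finset.mem_powerset.mp hS h)
    rw [Finset.card_insert_of_notMem hjS, Finset.sum_insert hjS, Finset.sum_insert hjS]
    have : x + (w j + ∑ i ∈ S, w i) + ((j + 1 : ℕ) : ℝ) • -(((j : ℝ) + 1)⁻¹ • w j
        + ∑ i ∈ S, ((i : ℝ) + 1)⁻¹ • w i) =
        x + ∑ i ∈ S, w i + ((j + 1 : ℕ) : ℝ) • -(∑ i ∈ S, ((i : ℝ) + 1)⁻¹ • w i) := by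
      have hne : ((j : ℝ) + 1) ≠ 0 := by positivity
      rw [neg_add, smul_add, smul_neg, smul_smul]
      push_cast
      rw [mul_inv_cancel₀ hne, one_smul]
      abel
    rw [this]
    ring

lemma diffl_eq_powerset {n : ℕ} (l : ℕ) (H : Rn n) (g : Rn n → ℝ) (x : Rn n) :
    diffl l H g x = (-1) ^ l * ∑ S ∈ (Finset.range l).powerset,
      (-1 : ℝ) ^ S.card * g (x + (S.card : ℝ) • H) := by
  rw [Finset.sum_powerset_apply_card (fun j => (-1 : ℝ) ^ j * g (x + (j : ℝ) • H)),
    Finset.card_range, Finset.mul_sum]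
  unfold diffl
  refine Finset.sum_congr rfl fun j _ => ?_
  rw [nsmul_eq_mul, pow_add]; ring

/-- The coefficient `∑_{i ∈ S} 1/(i+1)`. -/
def harm (S : Finset ℕ) : ℝ := ∑ i ∈ S, ((i : ℝ) + 1)⁻¹

lemma mixed_identity {n : ℕ} (l : ℕ) (H v : Rn n) (g : Rn n → ℝ) (x : Rn n) :
    diffl l H g (x + v) - diffl l H g x =
      ∑ S ∈ (Finset.range l).powerset, (-1 : ℝ) ^ S.card *
        diffl (l + 1) (-(harm S • H)) g (x + (S.card : ℝ) • H) +
      ∑ S ∈ (Finset.range l).powerset, (-1 : ℝ) ^ (S.card + 1) *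
        diffl (l + 1) (-(harm S • H + ((l : ℝ) + 1)⁻¹ • v)) g (x + ((S.card : ℝ) • H + v)) := by
  have hK := kemperman (l + 1) (fun i => if i = l then v else H) g x
  rw [Finset.range_add_one, Finset.sum_powerset_insert (by simp),
    Finset.sum_powerset_insert (by simp)] at hK
  have hS : ∀ S ∈ (Finset.range l).powerset, l ∉ S := fun S hS h =>
    absurd (Finset.mem_powerset.mp hS h) (by simp)
  have e1 : ∀ S ∈ (Finset.range l).powerset,
      (∑ i ∈ S, (if i = l then v else H)) = (S.card : ℝ) • H := by
    intro S hS'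
    rw [Finset.sum_congr rfl (g := fun _ => H)]
    · rw [Finset.sum_const, Nat.cast_smul_eq_nsmul]
    · intro i hi
      rw [if_neg]
      rintro rfl
      exact hS S hS' hi
  have e2 : ∀ S ∈ (Finset.range l).powerset,
      (∑ i ∈ S, ((i : ℝ) + 1)⁻¹ • (if i = l then v else H)) = harm S • H := by
    intro S hS'
    rw [harm, Finset.sum_smul]
    refine Finset.sum_congr rfl fun i hi => ?_
    rw [if_neg]
    rintro rfl
    exact hS S hS' hi
  have e3 : ∀ S ∈ (Finset.range l).powerset,
      (∑ i ∈ insert l S, (if i = l then v else H)) = (S.card : ℝ) • H + v := by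
    intro S hS'
    rw [Finset.sum_insert (hS S hS'), e1 S hS', if_pos rfl, add_comm]
  have e4 : ∀ S ∈ (Finset.range l).powerset,
      (∑ i ∈ insert l S, ((i : ℝ) + 1)⁻¹ • (if i = l then v else H)) =
        harm S • H + ((l : ℝ) + 1)⁻¹ • v := by
    intro S hS'
    rw [Finset.sum_insert (hS S hS'), e2 S hS', if_pos rfl, add_comm]
  have e5 : ∀ S ∈ (Finset.range l).powerset, (insert l S).card = S.card + 1 := fun S hS' =>
    Finset.card_insert_of_notMem (hS S hS')
  have f1 := Finset.sum_congr (rfl : (Finset.range l).powerset = _) (fun S hS' =>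
    show (-1 : ℝ) ^ S.card * diffl (l + 1)
        (-∑ i ∈ S, ((i : ℝ) + 1)⁻¹ • (if i = l then v else H)) g
        (x + ∑ i ∈ S, (if i = l then v else H)) =
      (-1 : ℝ) ^ S.card * diffl (l + 1) (-(harm S • H)) g (x + (S.card : ℝ) • H) by
        rw [e1 S hS', e2 S hS'])
  have f2 := Finset.sum_congr (rfl : (Finset.range l).powerset = _) (fun S hS' =>
    show (-1 : ℝ) ^ (insert l S).card * diffl (l + 1)
        (-∑ i ∈ insert l S, ((i : ℝ) + 1)⁻¹ • (if i = l then v else H)) g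
        (x + ∑ i ∈ insert l S, (if i = l then v else H)) =
      (-1 : ℝ) ^ (S.card + 1) * diffl (l + 1) (-(harm S • H + ((l : ℝ) + 1)⁻¹ • v)) g
        (x + ((S.card : ℝ) • H + v)) by
        rw [e3 S hS', e4 S hS', e5 S hS'])
  have f3 := Finset.sum_congr (rfl : (Finset.range l).powerset = _) (fun S hS' =>
    show (-1 : ℝ) ^ S.card * g (x + ∑ i ∈ S, (if i = l then v else H)) =
      (-1 : ℝ) ^ S.card * g (x + (S.card : ℝ) • H) by
        rw [e1 S hS'])
  have f4 : ∑ S ∈ (Finset.range l).powerset,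
      (-1 : ℝ) ^ (insert l S).card * g (x + ∑ i ∈ insert l S, (if i = l then v else H)) =
      - ∑ S ∈ (Finset.range l).powerset, (-1 : ℝ) ^ S.card * g (x + v + (S.card : ℝ) • H) := by
    rw [← Finset.sum_neg_distrib]
    refine Finset.sum_congr rfl fun S hS' => ?_
    rw [e3 S hS', e5 S hS', show x + ((S.card : ℝ) • H + v) = x + v + (S.card : ℝ) • H by abel]
    ring
  rw [f1, f2, f3, f4] at hK
  rw [hK, diffl_eq_powerset, diffl_eq_powerset]
  ring

/-- Elementary remainder terms. -/
def RemSet (n M : ℕ) : Set ((Rn n → ℝ) → Rn n → Rn n → Rn n → Rn n → ℝ) :=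
  {F | ∃ α β e γ δ f : ℝ, α * δ - β * γ ≠ 0 ∧
    F = fun φ h ξ z p => diffl M (α • h + β • ξ + e • p) φ (z + γ • h + δ • ξ + f • p)}

/-- Linear combinations of elementary remainder terms. -/
def Rem (n M : ℕ) : Submodule ℝ ((Rn n → ℝ) → Rn n → Rn n → Rn n → Rn n → ℝ) :=
  Submodule.span ℝ (RemSet n M)

lemma mem_Rem_elem {n M : ℕ} {F : (Rn n → ℝ) → Rn n → Rn n → Rn n → Rn n → ℝ}
    (α β e γ δ f : ℝ) (hd : α * δ - β * γ ≠ 0)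
    (hF : ∀ φ h ξ z p, F φ h ξ z p =
      diffl M (α • h + β • ξ + e • p) φ (z + γ • h + δ • ξ + f • p)) : F ∈ Rem n M :=
  Submodule.subset_span ⟨α, β, e, γ, δ, f, hd, by funext φ h ξ z p; exact hF φ h ξ z p⟩

lemma rem_marchaud_one (n l i : ℕ) :
    (fun (φ : Rn n → ℝ) (h ξ z _p : Rn n) => diffl l ((2 : ℝ) ^ i • h) φ (z + ξ) -
      (2 : ℝ)⁻¹ ^ l * diffl l ((2 : ℝ) ^ (i + 1) • h) φ (z + ξ)) ∈ Rem n (l + 1) := by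
  obtain ⟨d, c, hc⟩ := marchaud n l
  have : (fun (φ : Rn n → ℝ) (h ξ z _p : Rn n) => diffl l ((2 : ℝ) ^ i • h) φ (z + ξ) -
      (2 : ℝ)⁻¹ ^ l * diffl l ((2 : ℝ) ^ (i + 1) • h) φ (z + ξ)) =
      ∑ j ∈ Finset.range d, c j • (fun (φ : Rn n → ℝ) (h ξ z _p : Rn n) =>
        diffl (l + 1) ((2 : ℝ) ^ i • h) φ (z + ξ + (j : ℝ) • (2 : ℝ) ^ i • h)) := by
    funext φ h ξ z p
    have := hc φ ((2 : ℝ) ^ i • h) (z + ξ)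
    rw [smul_smul, ← pow_succ'] at this
    rw [this]
    simp [Finset.sum_apply]
  rw [this]
  refine Submodule.sum_mem _ fun j _ => Submodule.smul_mem _ _ ?_
  refine mem_Rem_elem ((2 : ℝ) ^ i) 0 0 (j * 2 ^ i) 1 0 (by simp) ?_
  intro φ h ξ z p
  congr 1
  · module
  · module

lemma rem_marchaud (n l N : ℕ) :
    (fun (φ : Rn n → ℝ) (h ξ z _p : Rn n) => diffl l h φ (z + ξ) -
      ((2 : ℝ)⁻¹ ^ l) ^ N * diffl l ((2 : ℝ) ^ N • h) φ (z + ξ)) ∈ Rem n (l + 1) := by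
  induction N with
  | zero => 
    have : (fun (φ : Rn n → ℝ) (h ξ z _p : Rn n) => diffl l h φ (z + ξ) -
      ((2 : ℝ)⁻¹ ^ l) ^ 0 * diffl l ((2 : ℝ) ^ 0 • h) φ (z + ξ)) = 0 := by
      funext φ h ξ z p; simp
    rw [this]; exact Submodule.zero_mem _
  | succ N ih =>
    have h1 := Submodule.add_mem _ ih (Submodule.smul_mem _ (((2 : ℝ)⁻¹ ^ l) ^ N)
      (rem_marchaud_one n l N))
    convert h1 using 1
    funext φ h ξ z p
    simp only [Pi.add_apply, Pi.smul_apply, smul_eq_mul]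
    ring

lemma harm_nonneg (S : Finset ℕ) : 0 ≤ harm S := Finset.sum_nonneg fun i _ => by positivity

lemma harm_ge {l : ℕ} {S : Finset ℕ} (hS : S ∈ (Finset.range l).powerset) :
    (S.card : ℝ) * ((l : ℝ) + 1)⁻¹ ≤ harm S := by
  rw [harm, ← nsmul_eq_mul]
  refine Finset.card_nsmul_le_sum _ _ _ fun i hi => ?_
  have : i < l := Finset.mem_range.mp (Finset.mem_powerset.mp hS hi)
  have : (i : ℝ) ≤ l := by exact_mod_cast this.le
  gcongr

lemma diffl_zero_step {n l : ℕ} (φ : Rn n → ℝ) (x : Rn n) : diffl (l + 1) 0 φ x = 0 := by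
  rw [diffl_succ]; simp

lemma rem_mixed (n l N : ℕ) :
    (fun (φ : Rn n → ℝ) (h ξ z p : Rn n) => 
      diffl l ((2 : ℝ) ^ N • h) φ (z + p + (2 : ℝ) ^ N • ξ + (2 : ℝ) ^ N • h) -
      diffl l ((2 : ℝ) ^ N • h) φ (z + ξ)) ∈ Rem n (l + 1) := by
  have : (fun (φ : Rn n → ℝ) (h ξ z p : Rn n) => 
      diffl l ((2 : ℝ) ^ N • h) φ (z + p + (2 : ℝ) ^ N • ξ + (2 : ℝ) ^ N • h) -
      diffl l ((2 : ℝ) ^ N • h) φ (z + ξ)) =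
      ∑ S ∈ (Finset.range l).powerset, (-1 : ℝ) ^ S.card •
        (fun (φ : Rn n → ℝ) (h ξ z p : Rn n) => diffl (l + 1) (-(harm S • (2 : ℝ) ^ N • h)) φ
          (z + ξ + (S.card : ℝ) • (2 : ℝ) ^ N • h)) +
      ∑ S ∈ (Finset.range l).powerset, (-1 : ℝ) ^ (S.card + 1) •
        (fun (φ : Rn n → ℝ) (h ξ z p : Rn n) => diffl (l + 1) (-(harm S • (2 : ℝ) ^ N • h
            + ((l : ℝ) + 1)⁻¹ • (p + ((2 : ℝ) ^ N - 1) • ξ + (2 : ℝ) ^ N • h))) φ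
          (z + ξ + ((S.card : ℝ) • (2 : ℝ) ^ N • h +
            (p + ((2 : ℝ) ^ N - 1) • ξ + (2 : ℝ) ^ N • h)))) := by
    funext φ h ξ z p
    have h1 := mixed_identity l ((2 : ℝ) ^ N • h)
      (p + ((2 : ℝ) ^ N - 1) • ξ + (2 : ℝ) ^ N • h) φ (z + ξ)
    rw [show z + ξ + (p + ((2 : ℝ) ^ N - 1) • ξ + (2 : ℝ) ^ N • h) =
      z + p + (2 : ℝ) ^ N • ξ + (2 : ℝ) ^ N • h by module] at h1
    rw [h1]
    simp [Finset.sum_apply]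
  rw [this]
  have h2N : (1 : ℝ) ≤ 2 ^ N := one_le_pow₀ (by norm_num)
  refine Submodule.add_mem _ (Submodule.sum_mem _ fun S hS => Submodule.smul_mem _ _ ?_)
    (Submodule.sum_mem _ fun S hS => Submodule.smul_mem _ _ ?_)
  · rcases S.eq_empty_or_nonempty with rfl | hne
    · convert Submodule.zero_mem _
      simp [harm, diffl_zero_step]
    · have hpos : 0 < harm S := Finset.sum_pos (fun i _ => by positivity) hne
      refine mem_Rem_elem (-(harm S * 2 ^ N)) 0 0 (S.card * 2 ^ N) 1 0 ?_ ?_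
      · have : 0 < harm S * 2 ^ N := by positivity
        linarith
      · intro φ h ξ z p
        congr 1
        · module
        · module
  · refine mem_Rem_elem (-((harm S + ((l : ℝ) + 1)⁻¹) * 2 ^ N))
      (-(((l : ℝ) + 1)⁻¹ * (2 ^ N - 1))) (-((l : ℝ) + 1)⁻¹)
      ((S.card + 1) * 2 ^ N) (2 ^ N) 1 ?_ ?_
    · have h1 := harm_ge hS
      have hb : 0 < ((l : ℝ) + 1)⁻¹ := by positivity
      set b := ((l : ℝ) + 1)⁻¹
      set a := harm S
      set c := (S.card : ℝ)
      have hc : 0 ≤ c := Nat.cast_nonneg _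
      set D := (2 : ℝ) ^ N
      have hD : 0 < D := by linarith
      have : -((a + b) * D) * D - -(b * (D - 1)) * ((c + 1) * D) < 0 := by
        have e : -((a + b) * D) * D - -(b * (D - 1)) * ((c + 1) * D) =
          - (D * ((a - c * b) * D + b * (c + 1))) := by ring
        rw [e, neg_lt_zero]
        have : 0 ≤ (a - c * b) * D := mul_nonneg (by linarith) hD.le
        positivity
      exact this.ne
    · intro φ h ξ z p
      congr 1
      · module
      · module

/-- The one-step identity. -/
lemma rem_step (n l N : ℕ) :
    (fun (φ : Rn n → ℝ) (h ξ z p : Rn n) => diffl l h φ (z + ξ) - ((2 : ℝ)⁻¹ ^ l) ^ N * 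
      diffl l ((2 : ℝ) ^ N • h) φ (z + p + (2 : ℝ) ^ N • ξ + (2 : ℝ) ^ N • h)) ∈ 
      Rem n (l + 1) := by
  have h1 := Submodule.sub_mem _ (rem_marchaud n l N) (Submodule.smul_mem _ (((2 : ℝ)⁻¹ ^ l) ^ N)
      (rem_mixed n l N))
  convert h1 using 1
  funext φ h ξ z p
  simp only [Pi.sub_apply, Pi.smul_apply, smul_eq_mul]
  ring

/-- The block linear map `(h, x) ↦ (α h + β x, γ h + δ x)`. -/
def Lmk (n : ℕ) (α β γ δ : ℝ) : (Rn n × Rn n) →ₗ[ℝ] (Rn n × Rn n) :=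
  (α • LinearMap.fst ℝ (Rn n) (Rn n) + β • LinearMap.snd ℝ (Rn n) (Rn n)).prod
    (γ • LinearMap.fst ℝ (Rn n) (Rn n) + δ • LinearMap.snd ℝ (Rn n) (Rn n))

lemma Lmk_apply (n : ℕ) (α β γ δ : ℝ) (hx : Rn n × Rn n) :
    Lmk n α β γ δ hx = (α • hx.1 + β • hx.2, γ • hx.1 + δ • hx.2) := rfl

lemma Lmk_comp (n : ℕ) (α β γ δ α' β' γ' δ' : ℝ) :
    Lmk n α β γ δ ∘ₗ Lmk n α' β' γ' δ' =
      Lmk n (α * α' + β * γ') (α * β' + β * δ') (γ * α' + δ * γ') (γ * β' + δ * δ') := by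
  refine LinearMap.ext fun x => ?_
  simp only [LinearMap.comp_apply, Lmk_apply]
  refine Prod.ext ?_ ?_
  · simp only; module
  · simp only; module

lemma Lmk_one (n : ℕ) : Lmk n 1 0 0 1 = LinearMap.id := by
  refine LinearMap.ext fun x => ?_
  simp [Lmk_apply]

lemma Lmk_det_ne_zero (n : ℕ) {α β γ δ : ℝ} (hd : α * δ - β * γ ≠ 0) :
    LinearMap.det (Lmk n α β γ δ) ≠ 0 := by
  set D := α * δ - β * γ with hD
  have h1 : Lmk n α β γ δ ∘ₗ Lmk n (D⁻¹ * δ) (-(D⁻¹ * β)) (-(D⁻¹ * γ)) (D⁻¹ * α) =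
      LinearMap.id := by
    rw [Lmk_comp, ← Lmk_one]
    congr 1
    · rw [show α * (D⁻¹ * δ) + β * -(D⁻¹ * γ) = D⁻¹ * (α * δ - β * γ) by ring, ← hD,
        inv_mul_cancel₀ hd]
    · ring
    · ring
    · rw [show γ * -(D⁻¹ * β) + δ * (D⁻¹ * α) = D⁻¹ * (α * δ - β * γ) by ring, ← hD,
        inv_mul_cancel₀ hd]
  have h2 := congrArg LinearMap.det h1
  rw [LinearMap.det_comp, LinearMap.det_id] at h2
  exact left_ne_zero_of_mul_eq_one h2

lemma Lmk_det_shear (n : ℕ) : LinearMap.det (Lmk n 1 0 1 1) = 1 := by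
  have h1 : (Lmk n 1 0 1 1 ∘ₗ Lmk n 1 0 1 1) ∘ₗ Lmk n 1 0 0 2 =
      Lmk n 1 0 0 2 ∘ₗ Lmk n 1 0 1 1 := by
    simp only [Lmk_comp]
    norm_num
  have h2 := congrArg LinearMap.det h1
  simp only [LinearMap.det_comp] at h2
  have h3 : LinearMap.det (Lmk n 1 0 1 1) ≠ 0 := Lmk_det_ne_zero n (by norm_num)
  have h4 : LinearMap.det (Lmk n 1 0 0 2) ≠ 0 := Lmk_det_ne_zero n (by norm_num)
  have h5 : LinearMap.det (Lmk n 1 0 1 1) * (LinearMap.det (Lmk n 1 0 1 1) *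
      LinearMap.det (Lmk n 1 0 0 2)) = 1 * (LinearMap.det (Lmk n 1 0 1 1) *
      LinearMap.det (Lmk n 1 0 0 2)) := by linear_combination h2
  exact mul_right_cancel₀ (mul_ne_zero h3 h4) h5

lemma Lmk_det_scaled (n : ℕ) (D : ℝ) : LinearMap.det (Lmk n D 0 D D) = D ^ (2 * n) := by
  have : Lmk n D 0 D D = D • Lmk n 1 0 1 1 := by
    refine LinearMap.ext fun x => ?_
    simp [Lmk_apply]
  rw [this, LinearMap.det_smul, Lmk_det_shear]
  simp [two_mul]

/-- Change of variables constant. -/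
def cvC (n : ℕ) (r : ℝ≥0∞) (α β γ δ : ℝ) : ℝ≥0∞ :=
  ENNReal.ofReal |(LinearMap.det (Lmk n α β γ δ))⁻¹| ^ (1 / r).toReal

lemma cvC_lt_top (n : ℕ) (r : ℝ≥0∞) (α β γ δ : ℝ) : cvC n r α β γ δ < ∞ :=
  ENNReal.rpow_lt_top_of_nonneg ENNReal.toReal_nonneg ENNReal.ofReal_ne_top

lemma affine_bound (n : ℕ) (r : ℝ≥0∞) {α β γ δ : ℝ} (hd : α * δ - β * γ ≠ 0) (t : Rn n × Rn n)
    {g : Rn n × Rn n → ℝ} (hg : Measurable g) {B B' : Set (Rn n × Rn n)}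
    (hB : MeasurableSet B) (hB' : MeasurableSet B')
    (hm : ∀ x ∈ B, t + Lmk n α β γ δ x ∈ B') :
    eLpNorm (fun x => g (t + Lmk n α β γ δ x)) r (volume.restrict B) ≤
      cvC n r α β γ δ * eLpNorm g r (volume.restrict B') := by
  set L := Lmk n α β γ δ
  have hLm : Measurable L := (LinearMap.continuous_of_finiteDimensional L).measurable
  set Φ : Rn n × Rn n → Rn n × Rn n := fun x => t + L x with hΦ
  have hΦm : Measurable Φ := hLm.const_add t
  have hHaar : (volume : Measure (Rn n × Rn n)).IsAddHaarMeasure := by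
    rw [Measure.volume_eq_prod]; exact Measure.prod.instIsAddHaarMeasure _ _
  have hmap : Measure.map Φ volume = ENNReal.ofReal |(LinearMap.det L)⁻¹| • volume := by
    have : Φ = (fun y => t + y) ∘ L := rfl
    rw [this, ← Measure.map_map (measurable_const_add t) hLm,
      Measure.map_linearMap_addHaar_eq_smul_addHaar _ (Lmk_det_ne_zero n hd), Measure.map_smul,
      map_add_left_eq_self]
  have hle : Measure.map Φ (volume.restrict B) ≤
      ENNReal.ofReal |(LinearMap.det L)⁻¹| • volume.restrict B' := by
    refine Measure.le_iff.mpr fun A hA => ?_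
    rw [Measure.map_apply hΦm hA, Measure.restrict_apply (hΦm hA), Measure.smul_apply,
      Measure.restrict_apply hA, ← Measure.smul_apply, ← hmap,
      Measure.map_apply hΦm (hA.inter hB')]
    exact measure_mono fun x hx => ⟨hx.1, hm x hx.2⟩
  have h1 : eLpNorm g r (Measure.map Φ (volume.restrict B)) = eLpNorm (g ∘ Φ) r (volume.restrict B) :=
    eLpNorm_map_measure hg.aestronglyMeasurable hΦm.aemeasurable
  change eLpNorm (g ∘ Φ) r (volume.restrict B) ≤ _
  rw [← h1]
  refine (eLpNorm_mono_measure g hle).trans ?_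
  exact eLpNorm_smul_measure_le _ _ _ _

lemma measurable_diffl {n : ℕ} (l : ℕ) {φ : Rn n → ℝ} (hφ : Measurable φ) :
    Measurable (fun hx : Rn n × Rn n => diffl l hx.1 φ hx.2) := by
  unfold diffl
  refine Finset.measurable_sum _ fun j _ => ?_
  refine Measurable.const_mul (hφ.comp ?_) _
  fun_prop

lemma measurableSet_openCube {n : ℕ} (x : Rn n) (s : ℝ) : MeasurableSet (openCube x s) := by
  have : openCube x s = ⋂ i, {y : Rn n | |y i - x i| < s} := by ext; simp [openCube]
  rw [this]
  refine MeasurableSet.iInter fun i => measurableSet_lt ?_ measurable_const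
  fun_prop

/-- The half-open cube `[a, b)^n` translated to `z`. -/
def boxQ {n : ℕ} (z : Rn n) (a b : ℝ) : Set (Rn n) := {y | ∀ i, z i + a ≤ y i ∧ y i < z i + b}

lemma measurableSet_boxQ {n : ℕ} (z : Rn n) (a b : ℝ) : MeasurableSet (boxQ z a b) := by
  have : boxQ z a b = ⋂ i, ({y : Rn n | z i + a ≤ y i} ∩ {y | y i < z i + b}) := by
    ext; simp [boxQ]
  rw [this]
  refine MeasurableSet.iInter fun i => (measurableSet_le measurable_const ?_).inter
    (measurableSet_lt ?_ measurable_const)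
  all_goals fun_prop

lemma rem_bound (n M : ℕ) (r : ℝ≥0∞) (τ : ℝ) (hτ : 0 ≤ τ)
    {G : (Rn n → ℝ) → Rn n → Rn n → Rn n → Rn n → ℝ} (hG : G ∈ Rem n M) :
    ∃ C : ℝ≥0∞, C < ∞ ∧ ∃ ρ₀ : ℝ, ∀ ρ, ρ₀ ≤ ρ → ∀ φ : Rn n → ℝ, Measurable φ → ∀ s : ℝ, 0 < s →
      ∀ z p : Rn n, (∀ i, |p i| ≤ τ * s) →
      Measurable (fun hx : Rn n × Rn n => G φ hx.1 hx.2 z p) ∧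
      eLpNorm (fun hx : Rn n × Rn n => G φ hx.1 hx.2 z p) r
        (volume.restrict (openCube 0 (2 * s) ×ˢ boxQ 0 0 s)) ≤
      C * eLpNorm (fun hx : Rn n × Rn n => diffl M hx.1 φ hx.2) r
        (volume.restrict (openCube 0 (ρ * s) ×ˢ openCube z (ρ * s))) := by
  unfold Rem at hG
  induction hG using Submodule.span_induction with
  | mem G hG =>
    obtain ⟨α, β, e, γ, δ, f, hd, rfl⟩ := hG
    refine ⟨cvC n r α β γ δ, cvC_lt_top _ _ _ _ _ _,
      1 + 2 * |α| + |β| + |e| * τ + 2 * |γ| + |δ| + |f| * τ, ?_⟩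
    intro ρ hρ φ hφ s hs z p hp
    have key := affine_bound n r hd (e • p, z + f • p) (measurable_diffl M hφ)
      (B := openCube 0 (2 * s) ×ˢ boxQ 0 0 s) (B' := openCube 0 (ρ * s) ×ˢ openCube z (ρ * s))
      ((measurableSet_openCube _ _).prod (measurableSet_boxQ _ _ _))
      ((measurableSet_openCube _ _).prod (measurableSet_openCube _ _)) (by
        rintro ⟨h, ξ⟩ ⟨hh, hξ⟩
        have bound : ∀ (a b c : ℝ) (i : Fin n), |a * h i + b * ξ i + c * p i| ≤
            (2 * |a| + |b| + |c| * τ) * s := by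
          intro a b c i
          have h1 : |h i| ≤ 2 * s := by have := hh i; simp at this; exact this.le
          have h2 : |ξ i| ≤ s := by
            have := hξ i
            simp at this
            rw [abs_of_nonneg this.1]; exact this.2.le
          calc |a * h i + b * ξ i + c * p i| ≤ |a * h i| + |b * ξ i| + |c * p i| :=
                abs_add_three _ _ _
            _ = |a| * |h i| + |b| * |ξ i| + |c| * |p i| := by simp only [abs_mul]
            _ ≤ |a| * (2 * s) + |b| * s + |c| * (τ * s) := by
                gcongr
                exact hp i
            _ = _ := by ring
        have k1 : (2 * |α| + |β| + |e| * τ) * s < ρ * s := by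
          refine mul_lt_mul_of_pos_right ?_ hs
          have : 0 ≤ 2 * |γ| + |δ| + |f| * τ := by positivity
          linarith
        have k2 : (2 * |γ| + |δ| + |f| * τ) * s < ρ * s := by
          refine mul_lt_mul_of_pos_right ?_ hs
          have : 0 ≤ 2 * |α| + |β| + |e| * τ := by positivity
          linarith
        refine ⟨fun i => ?_, fun i => ?_⟩
        · refine lt_of_le_of_lt (le_trans (le_of_eq ?_) (bound α β e i)) k1
          simp [Lmk_apply]; congr 1; ring
        · refine lt_of_le_of_lt (le_trans (le_of_eq ?_) (bound γ δ f i)) k2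
          simp [Lmk_apply]; congr 1; ring)
    have heq : (fun hx : Rn n × Rn n => diffl M (α • hx.1 + β • hx.2 + e • p) φ
        (z + γ • hx.1 + δ • hx.2 + f • p)) = fun x : Rn n × Rn n =>
        (fun hx : Rn n × Rn n => diffl M hx.1 φ hx.2)
          ((e • p, z + f • p) + Lmk n α β γ δ x) := by
      funext x
      simp only [Lmk_apply, Prod.fst_add, Prod.snd_add]
      congr 1
      · abel
      · abel
    refine ⟨?_, ?_⟩
    · rw [heq]
      exact (measurable_diffl M hφ).comp
        ((LinearMap.continuous_of_finiteDimensional (Lmk n α β γ δ)).measurable.const_add _)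
    · rw [heq]; exact key
  | zero => exact ⟨0, by simp, 0, fun ρ _ φ _ s _ z p _ => ⟨measurable_const, by simp⟩⟩
  | add G₁ G₂ _ _ ih₁ ih₂ =>
    obtain ⟨C₁, hC₁, ρ₁, h₁⟩ := ih₁
    obtain ⟨C₂, hC₂, ρ₂, h₂⟩ := ih₂
    refine ⟨LpAddConst r * (C₁ + C₂), ENNReal.mul_lt_top (LpAddConst_lt_top r)
      (ENNReal.add_lt_top.mpr ⟨hC₁, hC₂⟩), max ρ₁ ρ₂, ?_⟩
    intro ρ hρ φ hφ s hs z p hp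
    obtain ⟨m₁, e₁⟩ := h₁ ρ (le_of_max_le_left hρ) φ hφ s hs z p hp
    obtain ⟨m₂, e₂⟩ := h₂ ρ (le_of_max_le_right hρ) φ hφ s hs z p hp
    refine ⟨m₁.add m₂, ?_⟩
    refine (eLpNorm_add_le' m₁.aestronglyMeasurable m₂.aestronglyMeasurable r).trans ?_
    rw [mul_assoc, add_mul]
    gcongr
  | smul c G _ ih =>
    obtain ⟨C, hC, ρ₁, h₁⟩ := ih
    refine ⟨‖c‖ₑ * C, ENNReal.mul_lt_top (by simp) hC, ρ₁, ?_⟩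
    intro ρ hρ φ hφ s hs z p hp
    obtain ⟨m₁, e₁⟩ := h₁ ρ hρ φ hφ s hs z p hp
    refine ⟨m₁.const_smul c, ?_⟩
    refine (eLpNorm_const_smul_le (c := c)).trans ?_
    rw [mul_assoc]
    gcongr

lemma eLpNorm_union_le {α : Type*} [MeasurableSpace α] (μ : Measure α) (r : ℝ≥0∞) {f : α → ℝ}
    (hf : Measurable f) {A B : Set α} (hA : MeasurableSet A) (hB : MeasurableSet B) :
    eLpNorm f r (μ.restrict (A ∪ B)) ≤
      LpAddConst r * (eLpNorm f r (μ.restrict A) + eLpNorm f r (μ.restrict B)) := by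
  rw [← eLpNorm_indicator_eq_eLpNorm_restrict (hA.union hB)]
  have h1 : (A ∪ B).indicator f = A.indicator f + (B \ A).indicator f := by
    rw [← Set.union_sdiff_self, Set.indicator_union_of_disjoint Set.disjoint_sdiff_right]
    rfl
  rw [h1]
  refine (eLpNorm_add_le' (hf.indicator hA).aestronglyMeasurable
    (hf.indicator (hB.diff hA)).aestronglyMeasurable r).trans ?_
  rw [eLpNorm_indicator_eq_eLpNorm_restrict hA, eLpNorm_indicator_eq_eLpNorm_restrict (hB.diff hA)]
  gcongr
  exact Set.sdiff_subset

lemma one_le_LpAddConst (r : ℝ≥0∞) : 1 ≤ LpAddConst r := by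
  unfold LpAddConst
  split_ifs with h
  · refine ENNReal.one_le_rpow (by norm_num) ?_
    have h1 : 0 < r := h.1
    have h2 : r < 1 := h.2
    have h3 : r.toReal < 1 := by
      have := (ENNReal.toReal_lt_toReal h2.ne_top (by simp)).2 h2
      simpa using this
    have h4 : 0 < r.toReal := ENNReal.toReal_pos h1.ne' h2.ne_top
    have h5 : 1 < 1 / r.toReal := by rw [lt_div_iff₀ h4]; linarith
    linarith
  · exact le_rfl

lemma eLpNorm_cover_le {α ι : Type*} [MeasurableSpace α] (μ : Measure α) (r : ℝ≥0∞) {f : α → ℝ}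
    (hf : Measurable f) (U : Finset ι) (S : ι → Set α) (hS : ∀ u ∈ U, MeasurableSet (S u)) :
    eLpNorm f r (μ.restrict (⋃ u ∈ U, S u)) ≤
      LpAddConst r ^ U.card * ∑ u ∈ U, eLpNorm f r (μ.restrict (S u)) := by
  induction U using Finset.induction_on with
  | empty => simp
  | insert a U ha ih =>
    rw [Finset.set_biUnion_insert, Finset.sum_insert ha, Finset.card_insert_of_notMem ha]
    refine (eLpNorm_union_le μ r hf (hS a (by simp))
      (Finset.measurableSet_biUnion _ fun u hu => hS u (by simp [hu]))).trans ?_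
    rw [pow_succ', mul_assoc, mul_add (LpAddConst r ^ U.card)]
    refine mul_le_mul_right (add_le_add ?_ ?_) _
    · exact le_mul_of_one_le_left (by simp) (one_le_pow₀ (one_le_LpAddConst r))
    · exact ih fun u hu => hS u (by simp [hu])

/-- Lattice offsets of sup norm at most `R`. -/
def offs (n R : ℕ) : Finset (Fin n → ℤ) := Fintype.piFinset fun _ => Finset.Icc (-(R : ℤ)) R

lemma mem_offs {n R : ℕ} {u : Fin n → ℤ} : u ∈ offs n R ↔ ∀ i, |u i| ≤ R := by
  simp [offs, abs_le]

lemma measurableSet_dyadicCubeHalf (n k : ℕ) (m : Fin n → ℤ) :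
    MeasurableSet (dyadicCubeHalf n k m) := by
  have : dyadicCubeHalf n k m = ⋂ i, ({y : Rn n | (m i : ℝ) / 2 ^ k ≤ y i} ∩
      {y | y i < ((m i : ℝ) + 1) / 2 ^ k}) := by
    ext; simp [dyadicCubeHalf]
  rw [this]
  refine MeasurableSet.iInter fun i => (measurableSet_le measurable_const ?_).inter
    (measurableSet_lt ?_ measurable_const)
  all_goals fun_prop

lemma mem_dch {n k : ℕ} {m : Fin n → ℤ} {x : Rn n} :
    x ∈ dyadicCubeHalf n k m ↔ ∀ i, (m i : ℝ) ≤ 2 ^ k * x i ∧ 2 ^ k * x i < m i + 1 := by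
  have h2 : (0 : ℝ) < 2 ^ k := by positivity
  simp only [dyadicCubeHalf, Set.mem_ofPred_eq, div_le_iff₀ h2, lt_div_iff₀ h2, mul_comm]

/-- Index of the dyadic cube of level `k` which contains `x`. -/
def fidx {n : ℕ} (k : ℕ) (x : Rn n) : Fin n → ℤ := fun i => ⌊(2 : ℝ) ^ k * x i⌋

lemma mem_dch_iff {n k : ℕ} {m : Fin n → ℤ} {x : Rn n} :
    x ∈ dyadicCubeHalf n k m ↔ fidx k x = m := by
  rw [mem_dch, funext_iff]
  simp only [fidx, Int.floor_eq_iff]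

/-- Neighbourhood of radius `R` of the cube `Q_{k,m}`. -/
def nbhd {n : ℕ} (k : ℕ) (m : Fin n → ℤ) (R : ℕ) : Set (Rn n) :=
  {x | ∀ i, (m i : ℝ) - R ≤ 2 ^ k * x i ∧ 2 ^ k * x i < m i + R + 1}

lemma nbhd_subset {n : ℕ} (k : ℕ) (m : Fin n → ℤ) (R : ℕ) :
    nbhd k m R ⊆ ⋃ u ∈ offs n R, dyadicCubeHalf n k (m + u) := by
  intro x hx
  simp only [Set.mem_iUnion]
  refine ⟨fidx k x - m, ?_, ?_⟩
  · rw [mem_offs]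
    intro i
    obtain ⟨h1, h2⟩ := hx i
    have h3 : m i - R ≤ ⌊(2 : ℝ) ^ k * x i⌋ := Int.le_floor.mpr (by push_cast; exact h1)
    have h4 : ⌊(2 : ℝ) ^ k * x i⌋ < m i + R + 1 := Int.floor_lt.mpr (by push_cast; exact h2)
    simp only [Pi.sub_apply, fidx]
    rw [abs_le]; constructor <;> linarith
  · rw [mem_dch_iff]; abel

/-- Normalisation factor at level `k`. -/
def wt (n : ℕ) (r : ℝ≥0∞) (k : ℕ) : ℝ≥0∞ :=
  ENNReal.ofReal ((2 : ℝ) ^ (1 - (k : ℤ))) ^ (-(2 * (n : ℝ)) / r.toReal)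

/-- The basic local quantity. -/
def DE (n l : ℕ) (r : ℝ≥0∞) (φ : Rn n → ℝ) (s : ℝ) (S : Set (Rn n)) : ℝ≥0∞ :=
  eLpNorm (fun hx : Rn n × Rn n => diffl l hx.1 φ hx.2) r (volume.restrict (openCube 0 s ×ˢ S))

/-- The discretised difference. -/
def DA (n l : ℕ) (r : ℝ≥0∞) (φ : Rn n → ℝ) (k : ℕ) (m : Fin n → ℤ) : ℝ≥0∞ :=
  wt n r k * DE n l r φ ((2 : ℝ) ^ (1 - (k : ℤ))) (dyadicCubeHalf n k m)

lemma deltaE_eq (n l : ℕ) (r : ℝ≥0∞) (φ : Rn n → ℝ) (s : ℝ) (S : Set (Rn n)) :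
    deltaE n l r s S φ = ENNReal.ofReal s ^ (-(2 * (n : ℝ)) / r.toReal) * DE n l r φ s S := by
  unfold deltaE DE
  rw [Measure.prod_restrict, Measure.volume_eq_prod]

lemma wt_lt_top (n : ℕ) (r : ℝ≥0∞) (k : ℕ) : wt n r k < ∞ := by
  unfold wt
  have : ENNReal.ofReal ((2 : ℝ) ^ (1 - (k : ℤ))) ≠ 0 := by
    simp; positivity
  exact (ENNReal.rpow_ne_top_of_ne_zero this ENNReal.ofReal_ne_top).lt_top

lemma wt_pos (n : ℕ) (r : ℝ≥0∞) (k : ℕ) : wt n r k ≠ 0 := by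
  unfold wt
  exact (ENNReal.rpow_pos (by simp; positivity) ENNReal.ofReal_ne_top).ne'

lemma openCube_mono {n : ℕ} (x : Rn n) {s s' : ℝ} (h : s ≤ s') : openCube x s ⊆ openCube x s' :=
  fun _ hy i => (hy i).trans_le h

lemma DE_mono {n l : ℕ} {r : ℝ≥0∞} {φ : Rn n → ℝ} {s s' : ℝ} {S S' : Set (Rn n)}
    (h : s ≤ s') (hS : S ⊆ S') : DE n l r φ s S ≤ DE n l r φ s' S' :=
  eLpNorm_mono_measure _ (Measure.restrict_mono (Set.prod_mono (openCube_mono 0 h) hS) le_rfl)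

/-- Covering constant. -/
def covK (n : ℕ) (r : ℝ≥0∞) (R : ℕ) : ℝ≥0∞ := LpAddConst r ^ (offs n R).card

lemma covK_lt_top (n : ℕ) (r : ℝ≥0∞) (R : ℕ) : covK n r R < ∞ :=
  ENNReal.pow_lt_top (LpAddConst_lt_top r)

lemma DE_cover {n l : ℕ} {r : ℝ≥0∞} {φ : Rn n → ℝ} (hφ : Measurable φ) {s : ℝ} {S : Set (Rn n)}
    {k : ℕ} {m : Fin n → ℤ} {R : ℕ} (hs : s ≤ (2 : ℝ) ^ (1 - (k : ℤ))) (hS : S ⊆ nbhd k m R) :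
    wt n r k * DE n l r φ s S ≤ covK n r R * ∑ u ∈ offs n R, DA n l r φ k (m + u) := by
  have h1 : DE n l r φ s S ≤ covK n r R * ∑ u ∈ offs n R,
      DE n l r φ ((2 : ℝ) ^ (1 - (k : ℤ))) (dyadicCubeHalf n k (m + u)) := by
    refine (DE_mono hs (hS.trans (nbhd_subset k m R))).trans ?_
    unfold DE covK
    rw [Set.prod_iUnion₂]
    exact eLpNorm_cover_le _ r (measurable_diffl l hφ) _ _
      fun u _ => (measurableSet_openCube _ _).prod (measurableSet_dyadicCubeHalf _ _ _)
  refine (mul_le_mul_right h1 _).trans (le_of_eq ?_)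
  unfold DA
  rw [← Finset.mul_sum]
  ring

lemma V_cover {n : ℕ} {r : ℝ≥0∞} {φ : Rn n → ℝ} (hφ : Measurable φ) {S : Set (Rn n)}
    {k : ℕ} {m : Fin n → ℤ} {R : ℕ} (hS : S ⊆ nbhd k m R) :
    eLpNorm φ r (volume.restrict S) ≤ covK n r R * ∑ u ∈ offs n R,
      eLpNorm φ r (volume.restrict (dyadicCubeHalf n k (m + u))) := by
  refine (eLpNorm_mono_measure _ (Measure.restrict_mono (hS.trans (nbhd_subset k m R))
    le_rfl)).trans ?_
  exact eLpNorm_cover_le _ r hφ _ _ fun u _ => measurableSet_dyadicCubeHalf _ _ _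

lemma measurableSet_nbhd {n : ℕ} (k : ℕ) (m : Fin n → ℤ) (R : ℕ) :
    MeasurableSet (nbhd k m R) := by
  have : nbhd k m R = ⋂ i, ({y : Rn n | (m i : ℝ) - R ≤ 2 ^ k * y i} ∩
      {y | 2 ^ k * y i < (m i : ℝ) + R + 1}) := by
    ext; simp [nbhd]
  rw [this]
  refine MeasurableSet.iInter fun i => (measurableSet_le measurable_const ?_).inter
    (measurableSet_lt ?_ measurable_const)
  all_goals fun_prop

/-- Index of the dyadic ancestor `N` levels up. -/
def anc {n : ℕ} (N : ℕ) (m : Fin n → ℤ) : Fin n → ℤ := fun i => m i / 2 ^ N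

lemma anc_bounds {n : ℕ} (N : ℕ) (m : Fin n → ℤ) (i : Fin n) :
    (2 : ℝ) ^ N * (anc N m i : ℝ) ≤ m i ∧ (m i : ℝ) + 1 ≤ 2 ^ N * (anc N m i : ℝ) + 2 ^ N := by
  have h0 : (0 : ℤ) < 2 ^ N := by positivity
  have h1 := Int.mul_ediv_add_emod (m i) (2 ^ N)
  have h2 := Int.emod_nonneg (m i) h0.ne'
  have h3 := Int.emod_lt_of_pos (m i) h0
  unfold anc
  constructor
  · have : (2 : ℤ) ^ N * (m i / 2 ^ N) ≤ m i := by linarith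
    exact_mod_cast this
  · have : m i + 1 ≤ (2 : ℤ) ^ N * (m i / 2 ^ N) + 2 ^ N := by linarith
    exact_mod_cast this

/-- Scaling constant for `wt`. -/
def wtc (n : ℕ) (r : ℝ≥0∞) (N : ℕ) : ℝ≥0∞ :=
  ENNReal.ofReal (((2 : ℝ) ^ N)⁻¹) ^ (-(2 * (n : ℝ)) / r.toReal)

lemma wtc_lt_top (n : ℕ) (r : ℝ≥0∞) (k : ℕ) : wtc n r k < ∞ := by
  unfold wtc
  have : ENNReal.ofReal (((2 : ℝ) ^ k)⁻¹) ≠ 0 := by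
    simp
  exact (ENNReal.rpow_ne_top_of_ne_zero this ENNReal.ofReal_ne_top).lt_top

lemma wt_add (n : ℕ) (r : ℝ≥0∞) (N k : ℕ) : wt n r (N + k) = wtc n r N * wt n r k := by
  unfold wt wtc
  have h : (2 : ℝ) ^ (1 - ((N + k : ℕ) : ℤ)) = ((2 : ℝ) ^ N)⁻¹ * (2 : ℝ) ^ (1 - (k : ℤ)) := by
    rw [← zpow_natCast, ← zpow_neg, ← zpow_add₀ (by norm_num)]
    congr 1; push_cast; ring
  rw [h, ENNReal.ofReal_mul (by positivity), ENNReal.mul_rpow_of_ne_top ENNReal.ofReal_ne_top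
    ENNReal.ofReal_ne_top]

lemma wtc_mul_cvC (n : ℕ) (r : ℝ≥0∞) (N : ℕ) :
    wtc n r N * cvC n r ((2 : ℝ) ^ N) 0 ((2 : ℝ) ^ N) ((2 : ℝ) ^ N) = 1 := by
  unfold wtc cvC
  rw [Lmk_det_scaled, abs_of_pos (by positivity), show (((2 : ℝ) ^ N) ^ (2 * n))⁻¹ = (((2 : ℝ) ^ N)⁻¹) ^ (2 * n) from
      (inv_pow _ _).symm, ENNReal.ofReal_pow (by positivity),
    ← ENNReal.rpow_natCast, ← ENNReal.rpow_mul, ← ENNReal.rpow_add _ _ (by simp) (by simp)]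
  convert ENNReal.rpow_zero
  simp [ENNReal.toReal_inv]
  ring

lemma two_zpow_eq (k : ℕ) : (2 : ℝ) ^ (1 - (k : ℤ)) = 2 * (1 / 2 ^ k) := by
  rw [zpow_sub₀ (by norm_num)]; simp [div_eq_mul_inv]

lemma cvC_one (n : ℕ) (r : ℝ≥0∞) : cvC n r 1 0 0 1 = 1 := by
  unfold cvC; rw [Lmk_one]; simp

/-- The one-step estimate. -/
lemma one_step (n l : ℕ) (r : ℝ≥0∞) :
    ∀ N : ℕ, ∃ C : ℝ≥0∞, C < ∞ ∧ ∃ L : ℕ, N ≤ L ∧ ∀ φ : Rn n → ℝ, Measurable φ →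
      ∀ k, L ≤ k → ∀ m : Fin n → ℤ,
      DA n l r φ k m ≤ (LpAddConst r * covK n r 2) * ENNReal.ofReal (((2 : ℝ)⁻¹ ^ l) ^ N) *
          ∑ u ∈ offs n 2, DA n l r φ (k - N) (anc N m + u) +
        C * ∑ u ∈ offs n 1, DA n (l + 1) r φ (k - L) (anc L m + u) := by
  intro N
  obtain ⟨C, hC, ρ₀, hR⟩ := rem_bound n (l + 1) r (2 ^ N) (by positivity) (rem_step n l N)
  obtain ⟨L₀, hL₀⟩ := pow_unbounded_of_one_lt ρ₀ (one_lt_two)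
  set L := max L₀ N with hLdef
  have hL : ρ₀ ≤ (2 : ℝ) ^ L := hL₀.le.trans (pow_le_pow_right₀ (by norm_num) (le_max_left _ _))
  refine ⟨LpAddConst r * (C * wtc n r L * covK n r 1), ?_, L, le_max_right _ _, ?_⟩
  · exact ENNReal.mul_lt_top (LpAddConst_lt_top r) (ENNReal.mul_lt_top (ENNReal.mul_lt_top hC
      (wtc_lt_top _ _ _)) (covK_lt_top _ _ _))
  intro φ hφ k hk m
  obtain ⟨k₁, rfl⟩ := Nat.exists_eq_add_of_le ((le_max_right L₀ N).trans hk)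
  obtain ⟨k₂, hk₂⟩ := Nat.exists_eq_add_of_le hk
  set k := N + k₁ with hkdef
  have hkN : k - N = k₁ := by omega
  have hkL : k - L = k₂ := by omega
  rw [hkN, hkL]
  have hpk : (2 : ℝ) ^ k = 2 ^ N * 2 ^ k₁ := by rw [hkdef, pow_add]
  have hpk2 : (2 : ℝ) ^ k = 2 ^ L * 2 ^ k₂ := by rw [hk₂, pow_add]
  have p0 : (0 : ℝ) < 2 ^ k := by positivity
  have pN : (0 : ℝ) < 2 ^ N := by positivity
  have pL : (0 : ℝ) < 2 ^ L := by positivity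
  have p1 : (0 : ℝ) < 2 ^ k₁ := by positivity
  have p2 : (0 : ℝ) < 2 ^ k₂ := by positivity
  set s : ℝ := 1 / 2 ^ k with hs
  have hs0 : 0 < s := by positivity
  have hks : (2 : ℝ) ^ k * s = 1 := by rw [hs]; field_simp
  set z : Rn n := fun i => (m i : ℝ) / 2 ^ k with hz
  set p : Rn n := fun i => (anc N m i : ℝ) / 2 ^ k₁ - z i with hp
  have hkz : ∀ i, (2 : ℝ) ^ k * z i = m i := fun i => by rw [hz]; field_simp
  have hkp : ∀ i, (2 : ℝ) ^ k₁ * (z i + p i) = anc N m i := fun i => by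
    simp only [hp]; field_simp; ring
  have hp' : ∀ i, |p i| ≤ 2 ^ N * s := by
    intro i
    have e1 : (2 : ℝ) ^ k * p i = 2 ^ N * anc N m i - m i := by
      have := hkp i
      rw [← this, ← hkz i, hpk]; ring
    have := anc_bounds N m i
    have e2 : |(2 : ℝ) ^ k * p i| ≤ 2 ^ N := by rw [e1, abs_le]; constructor <;> linarith
    rw [abs_mul, abs_of_pos p0] at e2
    rw [hs, mul_one_div, le_div_iff₀ p0]; linarith
  obtain ⟨hGm, hGb⟩ := hR (2 ^ L) hL φ hφ s hs0 z p hp'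
  set G : Rn n × Rn n → ℝ := fun hx => diffl l hx.1 φ (z + hx.2) - ((2 : ℝ)⁻¹ ^ l) ^ N *
    diffl l ((2 : ℝ) ^ N • hx.1) φ (z + p + (2 : ℝ) ^ N • hx.2 + (2 : ℝ) ^ N • hx.1) with hGdef
  -- translate to the origin
  have hmz : Measurable (fun hx : Rn n × Rn n => diffl l hx.1 φ (z + hx.2)) :=
    (measurable_diffl l hφ).comp (measurable_fst.prodMk (measurable_snd.const_add z))
  have t1 : DE n l r φ ((2 : ℝ) ^ (1 - (k : ℤ))) (dyadicCubeHalf n k m) ≤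
      eLpNorm (fun hx : Rn n × Rn n => diffl l hx.1 φ (z + hx.2)) r
        (volume.restrict (openCube 0 (2 * s) ×ˢ boxQ 0 0 s)) := by
    have := affine_bound n r (α := 1) (β := 0) (γ := 0) (δ := 1) (by norm_num) (0, -z) hmz
      (B := openCube 0 (2 * s) ×ˢ dyadicCubeHalf n k m) (B' := openCube 0 (2 * s) ×ˢ boxQ 0 0 s)
      ((measurableSet_openCube _ _).prod (measurableSet_dyadicCubeHalf _ _ _))
      ((measurableSet_openCube _ _).prod (measurableSet_boxQ _ _ _)) (by
        rintro ⟨h, x⟩ ⟨hh, hx⟩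
        rw [mem_dch] at hx
        simp only [Lmk_one, LinearMap.id_apply, Prod.mk_add_mk, zero_add]
        refine ⟨hh, fun i => ?_⟩
        obtain ⟨a1, a2⟩ := hx i
        rw [← hkz i] at a1 a2
        simp only [Pi.zero_apply, zero_add, Pi.add_apply, Pi.neg_apply]
        constructor
        · have := le_of_mul_le_mul_left a1 p0; linarith
        · have : 2 ^ k * x i < 2 ^ k * (z i + s) := by rw [mul_add, hks]; exact a2
          have := lt_of_mul_lt_mul_left this p0.le; linarith)
    rw [cvC_one, one_mul] at this
    unfold DE
    rw [two_zpow_eq]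
    convert this using 4 with hx <;> simp [Lmk_one]
  -- the main term
  set c : ℝ := ((2 : ℝ)⁻¹ ^ l) ^ N with hc
  have hc0 : 0 ≤ c := by positivity
  set Mn : Rn n × Rn n → ℝ := fun hx => c *
    diffl l ((2 : ℝ) ^ N • hx.1) φ (z + p + (2 : ℝ) ^ N • hx.2 + (2 : ℝ) ^ N • hx.1) with hMn
  set F : Rn n × Rn n → ℝ := fun hx =>
    diffl l ((2 : ℝ) ^ N • hx.1) φ (z + p + (2 : ℝ) ^ N • hx.2 + (2 : ℝ) ^ N • hx.1) with hF
  have hFm : Measurable F := by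
    refine (measurable_diffl l hφ).comp (Measurable.prodMk (by fun_prop) (by fun_prop))
  have t2 : eLpNorm F r (volume.restrict (openCube 0 (2 * s) ×ˢ boxQ 0 0 s)) ≤
      cvC n r ((2 : ℝ) ^ N) 0 ((2 : ℝ) ^ N) ((2 : ℝ) ^ N) *
        DE n l r φ ((2 : ℝ) ^ (1 - (k₁ : ℤ))) (nbhd k₁ (anc N m) 2) := by
    have := affine_bound n r (α := (2 : ℝ) ^ N) (β := 0) (γ := (2 : ℝ) ^ N) (δ := (2 : ℝ) ^ N)
      (by simp) (0, z + p) (measurable_diffl l hφ)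
      (B := openCube 0 (2 * s) ×ˢ boxQ 0 0 s)
      (B' := openCube 0 ((2 : ℝ) ^ (1 - (k₁ : ℤ))) ×ˢ nbhd k₁ (anc N m) 2)
      ((measurableSet_openCube _ _).prod (measurableSet_boxQ _ _ _))
      ((measurableSet_openCube _ _).prod (measurableSet_nbhd _ _ _)) (by
        rintro ⟨h, x⟩ ⟨hh, hx⟩
        simp only [Lmk_apply, Prod.mk_add_mk, zero_add, zero_smul, add_zero]
        have hh' : ∀ i, |2 ^ k * h i| < 2 := fun i => by
          have := hh i
          simp only [Pi.zero_apply, sub_zero] at this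
          rw [abs_mul, abs_of_pos p0]
          calc 2 ^ k * |h i| < 2 ^ k * (2 * s) := by gcongr
            _ = 2 * (2 ^ k * s) := by ring
            _ = 2 := by rw [hks]; ring
        refine ⟨fun i => ?_, fun i => ?_⟩
        · rw [two_zpow_eq]
          simp only [Pi.zero_apply, sub_zero, Pi.smul_apply, smul_eq_mul]
          rw [← mul_lt_mul_iff_right₀ p1, ← abs_of_pos p1, ← abs_mul, abs_of_pos p1]
          have e : (2 : ℝ) ^ k₁ * (2 * (1 / 2 ^ k₁)) = 2 := by field_simp
          rw [e, ← mul_assoc, mul_comm ((2 : ℝ) ^ k₁), ← hpk]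
          exact hh' i
        · have e : (2 : ℝ) ^ k₁ * ((z + p) i + ((2 : ℝ) ^ N • h i + (2 : ℝ) ^ N • x i)) =
              anc N m i + 2 ^ k * h i + 2 ^ k * x i := by
            rw [Pi.add_apply, mul_add, hkp, hpk]; simp only [smul_eq_mul]; ring
          have e' := hx i
          simp only [Pi.zero_apply, zero_add] at e'
          have f1 : 0 ≤ (2 : ℝ) ^ k * x i := mul_nonneg p0.le e'.1
          have f2 : (2 : ℝ) ^ k * x i < 1 := by rw [← hks]; exact mul_lt_mul_of_pos_left e'.2 p0
          have f3 := abs_lt.mp (hh' i)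
          change _ ≤ (2 : ℝ) ^ k₁ * ((z + p) i + ((2 : ℝ) ^ N • h i + (2 : ℝ) ^ N • x i)) ∧
            (2 : ℝ) ^ k₁ * ((z + p) i + ((2 : ℝ) ^ N • h i + (2 : ℝ) ^ N • x i)) < _
          rw [e]
          push_cast
          constructor <;> linarith)
    unfold DE
    convert this using 3 with hx
    simp only [hF, Lmk_apply, Prod.mk_add_mk, zero_add, zero_smul, add_zero]
    congr 1
    abel
  have t3 : eLpNorm Mn r (volume.restrict (openCube 0 (2 * s) ×ˢ boxQ 0 0 s)) ≤
      ENNReal.ofReal c * eLpNorm F r (volume.restrict (openCube 0 (2 * s) ×ˢ boxQ 0 0 s)) := by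
    have := eLpNorm_const_smul_le (c := c) (f := F) (p := r)
      (μ := volume.restrict (openCube 0 (2 * s) ×ˢ boxQ 0 0 s))
    rw [Real.enorm_eq_ofReal hc0] at this
    exact this
  have hsum : (fun hx : Rn n × Rn n => diffl l hx.1 φ (z + hx.2)) = Mn + G := by
    funext hx; simp only [Mn, hGdef, Pi.add_apply]; ring
  have hMm : Measurable Mn := hFm.const_mul c
  have t4 : DE n l r φ ((2 : ℝ) ^ (1 - (k : ℤ))) (dyadicCubeHalf n k m) ≤ LpAddConst r *
      (ENNReal.ofReal c * (cvC n r ((2 : ℝ) ^ N) 0 ((2 : ℝ) ^ N) ((2 : ℝ) ^ N) *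
        DE n l r φ ((2 : ℝ) ^ (1 - (k₁ : ℤ))) (nbhd k₁ (anc N m) 2)) +
        C * DE n (l + 1) r φ ((2 : ℝ) ^ L * s) (openCube z ((2 : ℝ) ^ L * s))) := by
    refine t1.trans ?_
    rw [hsum]
    refine (eLpNorm_add_le' hMm.aestronglyMeasurable hGm.aestronglyMeasurable r).trans ?_
    refine mul_le_mul_right (add_le_add (t3.trans (mul_le_mul_right t2 _)) hGb) _
  have hLs : (2 : ℝ) ^ L * s = 1 / 2 ^ k₂ := by rw [hs, hpk2]; field_simp
  have c1 := DE_cover (n := n) (l := l) (r := r) hφ (s := (2 : ℝ) ^ (1 - (k₁ : ℤ))) le_rfl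
    (subset_refl (nbhd k₁ (anc N m) 2))
  have c2 := DE_cover (n := n) (l := l + 1) (r := r) hφ (s := (2 : ℝ) ^ L * s) (k := k₂)
    (S := openCube z ((2 : ℝ) ^ L * s)) (m := anc L m) (R := 1)
    (by rw [two_zpow_eq, hLs]; have : 0 < 1 / (2 : ℝ) ^ k₂ := by positivity
        linarith) (by
      intro x hx i
      have h1 := hx i
      rw [hLs, ← mul_lt_mul_iff_right₀ p2, ← abs_of_pos p2, ← abs_mul, abs_of_pos p2,
        mul_one_div_cancel p2.ne', abs_lt, mul_sub] at h1
      have h2 := hkz i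
      have h3 := anc_bounds L m i
      rw [← h2, hpk2] at h3
      have h4 : (anc L m i : ℝ) ≤ 2 ^ k₂ * z i := by
        have := h3.1; rw [mul_assoc] at this; exact le_of_mul_le_mul_left this pL
      have h5 : 2 ^ k₂ * z i < anc L m i + 1 := by
        have : 2 ^ L * (2 ^ k₂ * z i) < 2 ^ L * (anc L m i + 1) := by
          rw [mul_add, ← mul_assoc]; linarith [h3.2]
        exact lt_of_mul_lt_mul_left this pL.le
      push_cast
      constructor <;> linarith [h1.1, h1.2])
  have w1 : wt n r k * cvC n r ((2 : ℝ) ^ N) 0 ((2 : ℝ) ^ N) ((2 : ℝ) ^ N) = wt n r k₁ := by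
    rw [hkdef, wt_add, mul_right_comm, wtc_mul_cvC, one_mul]
  have w2 : wt n r k = wtc n r L * wt n r k₂ := by rw [hk₂, wt_add]
  unfold DA at c1 c2 ⊢
  refine (mul_le_mul_right t4 _).trans ?_
  set X := DE n l r φ ((2 : ℝ) ^ (1 - (k₁ : ℤ))) (nbhd k₁ (anc N m) 2)
  set Y := DE n (l + 1) r φ ((2 : ℝ) ^ L * s) (openCube z ((2 : ℝ) ^ L * s))
  set Cv := cvC n r ((2 : ℝ) ^ N) 0 ((2 : ℝ) ^ N) ((2 : ℝ) ^ N)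
  calc wt n r k * (LpAddConst r * (ENNReal.ofReal c * (Cv * X) + C * Y))
      = LpAddConst r * ENNReal.ofReal c * ((wt n r k * Cv) * X) +
        LpAddConst r * (C * (wt n r k * Y)) := by ring
    _ = LpAddConst r * ENNReal.ofReal c * (wt n r k₁ * X) +
        LpAddConst r * (C * (wtc n r L * (wt n r k₂ * Y))) := by rw [w1, w2]; ring
    _ ≤ _ := by
        refine (add_le_add (mul_le_mul_right c1 _) (mul_le_mul_right (mul_le_mul_right
          (mul_le_mul_right c2 _) _) _)).trans (le_of_eq ?_)
        ring

lemma eLpNorm_finsum_le {α ι : Type*} [MeasurableSpace α] (μ : Measure α) (r : ℝ≥0∞)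
    (U : Finset ι) (f : ι → α → ℝ) (hf : ∀ u ∈ U, Measurable (f u)) :
    eLpNorm (fun x => ∑ u ∈ U, f u x) r μ ≤
      LpAddConst r ^ U.card * ∑ u ∈ U, eLpNorm (f u) r μ := by
  induction U using Finset.induction_on with
  | empty => simp
  | insert a U ha ih =>
    simp only [Finset.sum_insert ha, Finset.card_insert_of_notMem ha]
    refine (eLpNorm_add_le' (hf a (by simp)).aestronglyMeasurable
      (Finset.measurable_sum U fun u hu => hf u (by simp [hu])).aestronglyMeasurable r).trans ?_
    rw [pow_succ', mul_assoc, mul_add (LpAddConst r ^ U.card)]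
    refine mul_le_mul_right (add_le_add ?_ ?_) _
    · exact le_mul_of_one_le_left (by simp) (one_le_pow₀ (one_le_LpAddConst r))
    · exact ih fun u hu => hf u (by simp [hu])

lemma easy_step (n l : ℕ) (r : ℝ≥0∞) : ∃ C : ℝ≥0∞, C < ∞ ∧ ∀ φ : Rn n → ℝ, Measurable φ →
    ∀ k (m : Fin n → ℤ), DA n (l + 1) r φ k m ≤ C * ∑ u ∈ offs n 2, DA n l r φ k (m + u) := by
  refine ⟨LpAddConst r * (cvC n r 1 0 1 1 + 1) * covK n r 2, ?_, ?_⟩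
  · exact ENNReal.mul_lt_top (ENNReal.mul_lt_top (LpAddConst_lt_top r)
      (ENNReal.add_lt_top.mpr ⟨cvC_lt_top _ _ _ _ _ _, by simp⟩)) (covK_lt_top _ _ _)
  intro φ hφ k m
  set s := (2 : ℝ) ^ (1 - (k : ℤ)) with hs
  have p0 : (0 : ℝ) < 2 ^ k := by positivity
  have hsub : dyadicCubeHalf n k m ⊆ nbhd k m 2 := by
    intro x hx i
    rw [mem_dch] at hx
    have := hx i
    push_cast
    constructor <;> linarith
  have t1 : eLpNorm (fun hx : Rn n × Rn n => diffl l hx.1 φ (hx.2 + hx.1)) r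
      (volume.restrict (openCube 0 s ×ˢ dyadicCubeHalf n k m)) ≤
      cvC n r 1 0 1 1 * DE n l r φ s (nbhd k m 2) := by
    have := affine_bound n r (α := 1) (β := 0) (γ := 1) (δ := 1) (by norm_num) 0
      (measurable_diffl l hφ) (B := openCube 0 s ×ˢ dyadicCubeHalf n k m)
      (B' := openCube 0 s ×ˢ nbhd k m 2)
      ((measurableSet_openCube _ _).prod (measurableSet_dyadicCubeHalf _ _ _))
      ((measurableSet_openCube _ _).prod (measurableSet_nbhd _ _ _)) (by
        rintro ⟨h, x⟩ ⟨hh, hx⟩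
        simp only [Lmk_apply, zero_add, zero_smul, add_zero, one_smul]
        refine ⟨hh, fun i => ?_⟩
        rw [mem_dch] at hx
        have h1 := hx i
        have h2 := hh i
        simp only [Pi.zero_apply, sub_zero] at h2
        rw [hs, two_zpow_eq, ← mul_lt_mul_iff_right₀ p0, ← abs_of_pos p0, ← abs_mul,
          abs_of_pos p0, show (2 : ℝ) ^ k * (2 * (1 / 2 ^ k)) = 2 by field_simp, abs_lt] at h2
        change _ ≤ (2 : ℝ) ^ k * (h i + x i) ∧ (2 : ℝ) ^ k * (h i + x i) < _
        push_cast
        rw [mul_add]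
        constructor <;> linarith [h2.1, h2.2])
    unfold DE
    convert this using 4 with hx <;> simp [Lmk_apply, add_comm]
  have t2 : DE n (l + 1) r φ s (dyadicCubeHalf n k m) ≤
      LpAddConst r * (cvC n r 1 0 1 1 + 1) * DE n l r φ s (nbhd k m 2) := by
    have : (fun hx : Rn n × Rn n => diffl (l + 1) hx.1 φ hx.2) =
        (fun hx : Rn n × Rn n => diffl l hx.1 φ (hx.2 + hx.1)) -
        (fun hx : Rn n × Rn n => diffl l hx.1 φ hx.2) := by
      funext hx; simp [diffl_succ]
    unfold DE at *
    rw [this]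
    refine (eLpNorm_sub_le' ?_ (measurable_diffl l hφ).aestronglyMeasurable r).trans ?_
    · refine Measurable.aestronglyMeasurable ?_
      exact (measurable_diffl l hφ).comp (measurable_fst.prodMk (measurable_snd.add measurable_fst))
    · rw [mul_assoc, add_mul, one_mul]
      refine mul_le_mul_right (add_le_add t1 ?_) _
      exact DE_mono (n := n) (l := l) (r := r) (φ := φ) le_rfl hsub
  have c1 := DE_cover (n := n) (l := l) (r := r) hφ (s := s) le_rfl
    (subset_refl (nbhd k m 2))
  unfold DA at c1 ⊢
  refine (mul_le_mul_right t2 _).trans ?_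
  calc wt n r k * (LpAddConst r * (cvC n r 1 0 1 1 + 1) * DE n l r φ s (nbhd k m 2))
      = LpAddConst r * (cvC n r 1 0 1 1 + 1) * (wt n r k * DE n l r φ s (nbhd k m 2)) := by ring
    _ ≤ _ := (mul_le_mul_right c1 _).trans (le_of_eq (by ring))

lemma volume_openCube_lt_top {n : ℕ} (x : Rn n) (s : ℝ) : volume (openCube x s) < ∞ := by
  have : openCube x s ⊆ Set.Icc (fun i => x i - s) (fun i => x i + s) := by
    intro y hy
    constructor
    · intro i; have := abs_lt.mp (hy i); simp only; linarith
    · intro i; have := abs_lt.mp (hy i); simp only; linarith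
  exact (measure_mono this).trans_lt isCompact_Icc.measure_lt_top

lemma low_level (n l : ℕ) (r : ℝ≥0∞) (k : ℕ) : ∃ C : ℝ≥0∞, C < ∞ ∧ ∀ φ : Rn n → ℝ,
    Measurable φ → ∀ (m : Fin n → ℤ), DA n l r φ k m ≤ C * ∑ u ∈ offs n (2 * l),
      eLpNorm φ r (volume.restrict (dyadicCubeHalf n 0 (anc k m + u))) := by
  set W : ℝ≥0∞ := volume (openCube (0 : Rn n) 2) ^ (1 / r).toReal with hW
  have hWt : W < ∞ := ENNReal.rpow_lt_top_of_nonneg ENNReal.toReal_nonneg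
    (volume_openCube_lt_top _ _).ne
  set K : ℝ≥0∞ := LpAddConst r ^ (Finset.range (l + 1)).card * ∑ j ∈ Finset.range (l + 1),
    ‖(l.choose j : ℝ) * (-1 : ℝ) ^ (l + j)‖ₑ * (cvC n r 1 0 j 1 * W) with hK
  have hKt : K < ∞ := by
    refine ENNReal.mul_lt_top (ENNReal.pow_lt_top (LpAddConst_lt_top r)) ?_
    refine ENNReal.sum_lt_top.mpr fun j _ => ENNReal.mul_lt_top (by simp)
      (ENNReal.mul_lt_top (cvC_lt_top _ _ _ _ _ _) hWt)
  refine ⟨wt n r k * (K * covK n r (2 * l)), ENNReal.mul_lt_top (wt_lt_top _ _ _)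
    (ENNReal.mul_lt_top hKt (covK_lt_top _ _ _)), ?_⟩
  intro φ hφ m
  have p0 : (0 : ℝ) < 2 ^ k := by positivity
  set s := (2 : ℝ) ^ (1 - (k : ℤ)) with hs
  have hs2 : s ≤ 2 := by
    rw [hs, two_zpow_eq]
    have : 1 / (2 : ℝ) ^ k ≤ 1 := by
      rw [div_le_one p0]; exact one_le_pow₀ (by norm_num)
    linarith
  set B := nbhd 0 (anc k m) (2 * l) with hB
  have hsnd : eLpNorm (fun hx : Rn n × Rn n => φ hx.2) r
      (volume.restrict (openCube 0 2 ×ˢ B)) ≤ W * eLpNorm φ r (volume.restrict B) := by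
    have h1 : (volume : Measure (Rn n × Rn n)).restrict (openCube 0 2 ×ˢ B) =
        (volume.restrict (openCube 0 2)).prod (volume.restrict B) := by
      rw [Measure.prod_restrict, Measure.volume_eq_prod]
    have h2 := eLpNorm_map_measure (μ := (volume : Measure (Rn n × Rn n)).restrict
      (openCube 0 2 ×ˢ B)) (p := r) (f := Prod.snd) (g := φ) hφ.aestronglyMeasurable
      measurable_snd.aemeasurable
    have h3 : eLpNorm (fun hx : Rn n × Rn n => φ hx.2) r
      (volume.restrict (openCube 0 2 ×ˢ B)) = eLpNorm (φ ∘ Prod.snd) r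
      (volume.restrict (openCube 0 2 ×ˢ B)) := rfl
    rw [h3, ← h2, h1, Measure.map_snd_prod, Measure.restrict_apply_univ]
    exact eLpNorm_smul_measure_le _ _ _ _
  have tj : ∀ j ∈ Finset.range (l + 1),
      eLpNorm (fun hx : Rn n × Rn n => φ (hx.2 + (j : ℝ) • hx.1)) r
      (volume.restrict (openCube 0 s ×ˢ dyadicCubeHalf n k m)) ≤
      cvC n r 1 0 j 1 * W * eLpNorm φ r (volume.restrict B) := by
    intro j hj
    have hjl : (j : ℝ) ≤ l := by exact_mod_cast Nat.lt_succ_iff.mp (Finset.mem_range.mp hj)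
    have := affine_bound n r (α := 1) (β := 0) (γ := j) (δ := 1) (by norm_num) 0
      (g := fun hx : Rn n × Rn n => φ hx.2)
      (hφ.comp measurable_snd) (B := openCube 0 s ×ˢ dyadicCubeHalf n k m)
      (B' := openCube 0 2 ×ˢ B)
      ((measurableSet_openCube _ _).prod (measurableSet_dyadicCubeHalf _ _ _))
      ((measurableSet_openCube _ _).prod (measurableSet_nbhd _ _ _)) (by
        rintro ⟨h, x⟩ ⟨hh, hx⟩
        simp only [Lmk_apply, zero_add, zero_smul, add_zero, one_smul]
        refine ⟨openCube_mono 0 hs2 hh, fun i => ?_⟩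
        rw [mem_dch] at hx
        have h1 := hx i
        have h2 := openCube_mono 0 hs2 hh i
        have h3 := anc_bounds k m i
        simp only [Pi.zero_apply, sub_zero] at h2
        have h4 : |(j : ℝ) * h i| ≤ 2 * l := by
          rw [abs_mul, abs_of_nonneg (by positivity : (0 : ℝ) ≤ j)]
          calc (j : ℝ) * |h i| ≤ l * 2 := mul_le_mul hjl h2.le (abs_nonneg _) (by positivity)
            _ = _ := by ring
        rw [abs_le] at h4
        change _ ≤ (2 : ℝ) ^ 0 * (j * h i + x i) ∧ (2 : ℝ) ^ 0 * (j * h i + x i) < _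
        push_cast
        rw [pow_zero, one_mul]
        have h5 : (anc k m i : ℝ) ≤ x i :=
          le_of_mul_le_mul_left (h3.1.trans h1.1) p0
        have h6 : x i < anc k m i + 1 := by
          have : 2 ^ k * x i < 2 ^ k * (anc k m i + 1) := by rw [mul_add]; linarith [h1.2, h3.2]
          exact lt_of_mul_lt_mul_left this p0.le
        constructor <;> linarith [h4.1, h4.2])
    rw [mul_assoc]
    refine le_trans (le_of_eq ?_) (this.trans (mul_le_mul_right hsnd _))
    congr 1
    funext hx
    simp [Lmk_apply, add_comm]
  have t2 : DE n l r φ s (dyadicCubeHalf n k m) ≤ K * eLpNorm φ r (volume.restrict B) := by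
    unfold DE diffl
    refine (eLpNorm_finsum_le _ r _ _ ?_).trans ?_
    · intro j _
      refine Measurable.const_mul (hφ.comp ?_) _
      fun_prop
    · rw [hK, mul_assoc, Finset.sum_mul]
      refine mul_le_mul_right (Finset.sum_le_sum fun j hj => ?_) _
      refine (eLpNorm_const_smul_le (c := (l.choose j : ℝ) * (-1 : ℝ) ^ (l + j))
        (f := fun hx : Rn n × Rn n => φ (hx.2 + (j : ℝ) • hx.1))).trans ?_
      rw [mul_assoc]
      exact mul_le_mul_right (tj j hj) _
  have c1 := V_cover (n := n) (r := r) hφ (subset_refl B)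
  unfold DA
  rw [mul_assoc, mul_assoc]
  exact mul_le_mul_right (t2.trans (mul_le_mul_right c1 _)) _

lemma lqNorm_mono {ι : Type*} (q : ℝ≥0∞) {c d : ι → ℝ≥0∞} (h : ∀ i, c i ≤ d i) :
    lqNorm q c ≤ lqNorm q d := by
  unfold lqNorm
  split_ifs
  · exact iSup_mono h
  · refine ENNReal.rpow_le_rpow (ENNReal.tsum_le_tsum fun i => ?_) (by positivity)
    exact ENNReal.rpow_le_rpow (h i) ENNReal.toReal_nonneg

lemma lqNorm_const_mul {ι : Type*} {q : ℝ≥0∞} (hq : 0 < q) (a : ℝ≥0∞) (c : ι → ℝ≥0∞) :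
    lqNorm q (fun i => a * c i) = a * lqNorm q c := by
  unfold lqNorm
  split_ifs with h
  · rw [ENNReal.mul_iSup]
  · have hq' : 0 < q.toReal := ENNReal.toReal_pos hq.ne' h
    simp_rw [ENNReal.mul_rpow_of_nonneg _ _ hq'.le]
    rw [ENNReal.tsum_mul_left, ENNReal.mul_rpow_of_nonneg _ _ (by positivity), ← ENNReal.rpow_mul,
      mul_one_div_cancel hq'.ne', ENNReal.rpow_one]

/-- Quasi-triangle constant. -/
def qK (q : ℝ≥0∞) : ℝ≥0∞ := 2 * 2 ^ (1 / q.toReal)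

lemma qK_lt_top (q : ℝ≥0∞) : qK q < ∞ :=
  ENNReal.mul_lt_top (by simp) (ENNReal.rpow_lt_top_of_nonneg (by positivity) (by simp))

lemma one_le_qK (q : ℝ≥0∞) : 1 ≤ qK q := by
  unfold qK
  calc (1 : ℝ≥0∞) ≤ 2 * 1 := by norm_num
    _ ≤ _ := by
               gcongr
               rcases (ENNReal.toReal_nonneg (a := q)).eq_or_lt with h | h
               · rw [← h]; simp
               · exact ENNReal.one_le_rpow (by norm_num) (by positivity)

lemma add_rpow_le_aux (a b : ℝ≥0∞) {s : ℝ} (hs : 0 ≤ s) :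
    (a + b) ^ s ≤ 2 ^ s * (a ^ s + b ^ s) := by
  have h : a + b ≤ 2 * max a b := by
    rw [two_mul]; exact add_le_add (le_max_left _ _) (le_max_right _ _)
  refine (ENNReal.rpow_le_rpow h hs).trans ?_
  rw [ENNReal.mul_rpow_of_nonneg _ _ hs]
  gcongr
  rcases le_total a b with h | h
  · rw [max_eq_right h]; exact le_add_self
  · rw [max_eq_left h]; exact le_self_add

lemma lqNorm_add_le {ι : Type*} {q : ℝ≥0∞} (hq : 0 < q) (c d : ι → ℝ≥0∞) :
    lqNorm q (fun i => c i + d i) ≤ qK q * (lqNorm q c + lqNorm q d) := by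
  by_cases h : q = ∞
  · refine le_trans ?_ (le_mul_of_one_le_left (by simp) (one_le_qK q))
    unfold lqNorm
    rw [if_pos h, if_pos h, if_pos h]
    exact iSup_le fun i => add_le_add (le_iSup c i) (le_iSup d i)
  · unfold lqNorm qK
    rw [if_neg h, if_neg h, if_neg h]
    have hq' : 0 < q.toReal := ENNReal.toReal_pos hq.ne' h
    set F := ∑' i, c i ^ q.toReal
    set G := ∑' i, d i ^ q.toReal
    have h1 : ∑' i, (c i + d i) ^ q.toReal ≤ 2 ^ q.toReal * (F + G) := by
      rw [← ENNReal.tsum_add, ← ENNReal.tsum_mul_left]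
      exact ENNReal.tsum_le_tsum fun i => add_rpow_le_aux _ _ hq'.le
    refine (ENNReal.rpow_le_rpow h1 (by positivity)).trans ?_
    rw [ENNReal.mul_rpow_of_nonneg _ _ (by positivity), ← ENNReal.rpow_mul,
      mul_one_div_cancel hq'.ne', ENNReal.rpow_one, mul_assoc]
    gcongr
    exact add_rpow_le_aux _ _ (by positivity)

lemma lqNorm_zero {ι : Type*} {q : ℝ≥0∞} (hq : 0 < q) : lqNorm q (fun _ : ι => 0) = 0 := by
  have := lqNorm_const_mul (ι := ι) hq 0 (fun _ => 0)
  simpa using this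

lemma lqNorm_finsum_le {ι κ : Type*} {q : ℝ≥0∞} (hq : 0 < q) (U : Finset κ)
    (f : κ → ι → ℝ≥0∞) :
    lqNorm q (fun i => ∑ u ∈ U, f u i) ≤ qK q ^ U.card * ∑ u ∈ U, lqNorm q (f u) := by
  induction U using Finset.induction_on with
  | empty => simp [lqNorm_zero hq]
  | insert a U ha ih =>
    simp only [Finset.sum_insert ha, Finset.card_insert_of_notMem ha]
    refine (lqNorm_add_le hq _ _).trans ?_
    rw [pow_succ', mul_assoc, mul_add (qK q ^ U.card)]
    refine mul_le_mul_right (add_le_add ?_ ih) _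
    exact le_mul_of_one_le_left (by simp) (one_le_pow₀ (one_le_qK q))

lemma lqNorm_comp_le {ι κ : Type*} (q : ℝ≥0∞) (c : ι → ℝ≥0∞) {e : κ → ι}
    (he : Function.Injective e) : lqNorm q (fun i => c (e i)) ≤ lqNorm q c := by
  unfold lqNorm
  split_ifs
  · exact iSup_le fun i => le_iSup c (e i)
  · refine ENNReal.rpow_le_rpow ?_ (by positivity)
    exact ENNReal.tsum_comp_le_tsum_of_injective he (fun i => c i ^ q.toReal)

lemma le_lqNorm {ι : Type*} {q : ℝ≥0∞} (hq : 0 < q) (c : ι → ℝ≥0∞) (i : ι) : c i ≤ lqNorm q c := by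
  unfold lqNorm
  split_ifs with h
  · exact le_iSup c i
  · have hq' : 0 < q.toReal := ENNReal.toReal_pos hq.ne' h
    rw [one_div, ENNReal.le_rpow_inv_iff hq']
    exact ENNReal.le_tsum (f := fun i => c i ^ q.toReal) i

lemma lqNorm_fiber_le {ι κ : Type*} {q : ℝ≥0∞} (hq : 0 < q) (g : ι → κ) (T : ι → ℝ≥0∞)
    (S B : κ → ℝ≥0∞) (K : ℝ≥0∞)
    (h : ∀ j, lqNorm q (fun i : {i // g i = j} => T i.1) ≤ K * S j) :
    lqNorm q (fun i => T i * B (g i)) ≤ K * lqNorm q (fun j => S j * B j) := by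
  rw [← lqNorm_const_mul hq]
  by_cases hqt : q = ∞
  · unfold lqNorm
    rw [if_pos hqt, if_pos hqt]
    refine iSup_le fun i => le_trans ?_ (le_iSup _ (g i))
    beta_reduce
    rw [← mul_assoc]
    gcongr
    exact (le_lqNorm hq (fun i' : {i' // g i' = g i} => T i'.1) ⟨i, rfl⟩).trans (h (g i))
  · unfold lqNorm at h ⊢
    simp only [if_neg hqt] at h ⊢
    have hq' : 0 < q.toReal := ENNReal.toReal_pos hq.ne' hqt
    refine ENNReal.rpow_le_rpow ?_ (by positivity)
    rw [← (Equiv.sigmaFiberEquiv g).tsum_eq, ENNReal.tsum_sigma']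
    refine ENNReal.tsum_le_tsum fun j => ?_
    have h1 := ENNReal.rpow_le_rpow (h j) hq'.le
    rw [← ENNReal.rpow_mul, one_div_mul_cancel hq'.ne', ENNReal.rpow_one] at h1
    rw [← mul_assoc, ENNReal.mul_rpow_of_nonneg _ _ hq'.le]
    refine le_trans (le_of_eq ?_) (mul_le_mul_left h1 _)
    rw [← ENNReal.tsum_mul_right]
    refine tsum_congr fun i => ?_
    rw [← ENNReal.mul_rpow_of_nonneg _ _ hq'.le]
    simp [Equiv.sigmaFiberEquiv, i.2]

lemma lqNorm_shift_le {q : ℝ≥0∞} (hq : 0 < q) (N : ℕ) (b : ℕ → ℝ≥0∞) :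
    lqNorm q (fun k => if N ≤ k then b (k - N) else 0) ≤ lqNorm q b := by
  by_cases hqt : q = ∞
  · unfold lqNorm
    rw [if_pos hqt, if_pos hqt]
    refine iSup_le fun k => ?_
    beta_reduce
    split_ifs
    · exact le_iSup b _
    · simp
  · have hq' : 0 < q.toReal := ENNReal.toReal_pos hq.ne' hqt
    unfold lqNorm
    rw [if_neg hqt, if_neg hqt]
    refine ENNReal.rpow_le_rpow (le_of_eq ?_) (by positivity)
    rw [← (add_left_injective N).tsum_eq (f := fun k => (if N ≤ k then b (k - N) else 0) ^ q.toReal)]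
    · simp
    · intro k hk
      by_cases h : N ≤ k
      · exact ⟨k - N, by simp; omega⟩
      · simp [h, hq'] at hk

lemma lqNorm_low {q : ℝ≥0∞} (hq : 0 < q) (L : ℕ) : ∃ K : ℝ≥0∞, K < ∞ ∧ ∀ v : ℝ≥0∞,
    lqNorm q (fun k : ℕ => if k < L then v else 0) ≤ K * v := by
  refine ⟨lqNorm q (fun k : ℕ => if k < L then 1 else 0), ?_, fun v => ?_⟩
  · unfold lqNorm
    split_ifs with hqt
    · refine lt_of_le_of_lt (b := 1) (iSup_le fun k => ?_) (by simp)
      beta_reduce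
      split_ifs <;> simp
    · have hq' : 0 < q.toReal := ENNReal.toReal_pos hq.ne' hqt
      refine ENNReal.rpow_lt_top_of_nonneg (by positivity) ?_
      rw [tsum_eq_sum (s := Finset.range L)]
      · refine (ENNReal.sum_lt_top.mpr fun k _ => ?_).ne
        beta_reduce
        split_ifs <;> simp [hq']
      · intro k hk
        simp at hk
        simp [hk, hq']
  · rw [mul_comm, ← lqNorm_const_mul hq]
    refine lqNorm_mono q fun k => ?_
    split_ifs <;> simp

lemma lqNorm_le_of_trunc {q : ℝ≥0∞} (hq : 0 < q) (a : ℕ → ℝ≥0∞) (B : ℝ≥0∞)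
    (h : ∀ M, lqNorm q (fun k => if k < M then a k else 0) ≤ B) : lqNorm q a ≤ B := by
  by_cases hqt : q = ∞
  · have : ∀ k, a k ≤ B := fun k => by
      have := (le_lqNorm hq (fun i => if i < k + 1 then a i else 0) k).trans (h (k + 1))
      simpa using this
    unfold lqNorm
    rw [if_pos hqt]
    exact iSup_le this
  · have hq' : 0 < q.toReal := ENNReal.toReal_pos hq.ne' hqt
    unfold lqNorm at h ⊢
    simp only [if_neg hqt] at h ⊢
    rw [one_div, ENNReal.rpow_inv_le_iff hq', ENNReal.tsum_eq_iSup_nat]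
    refine iSup_le fun M => ?_
    have h1 := h M
    rw [one_div, ENNReal.rpow_inv_le_iff hq'] at h1
    refine le_trans ?_ h1
    refine le_trans (le_of_eq ?_) (ENNReal.sum_le_tsum (Finset.range M))
    refine Finset.sum_congr rfl fun k hk => ?_
    rw [if_pos (Finset.mem_range.mp hk)]

lemma absorb {q : ℝ≥0∞} (hq : 0 < q) (a c : ℕ → ℝ≥0∞) (θ : ℝ≥0∞) (N : ℕ) (hN : 0 < N)
    (hθ : qK q * θ ≤ 2⁻¹)
    (h : ∀ k, a k ≤ θ * (if N ≤ k then a (k - N) else 0) + c k) :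
    lqNorm q a ≤ 2 * qK q * lqNorm q c := by
  have hθt : θ < ∞ := by
    have h1 : θ ≤ qK q * θ := le_mul_of_one_le_left (by simp) (one_le_qK q)
    exact (h1.trans hθ).trans_lt (by simp)
  by_cases hc : lqNorm q c = ∞
  · rw [hc, ENNReal.mul_top]
    · exact le_top
    · have := one_le_qK q
      intro h0
      rcases mul_eq_zero.mp h0 with h1 | h1
      · simp at h1
      · rw [h1] at this; simp at this
  have hcf : ∀ k, c k < ∞ := fun k => (le_lqNorm hq c k).trans_lt (lt_top_iff_ne_top.mpr hc)
  have haf : ∀ k, a k < ∞ := by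
    intro k
    induction k using Nat.strong_induction_on with
    | _ k ih =>
      refine (h k).trans_lt (ENNReal.add_lt_top.mpr ⟨ENNReal.mul_lt_top hθt ?_, hcf k⟩)
      split_ifs with hk
      · exact ih _ (by omega)
      · simp
  refine lqNorm_le_of_trunc hq a _ fun M => ?_
  set aM : ℕ → ℝ≥0∞ := fun k => if k < M then a k else 0 with haM
  have hfin : lqNorm q aM < ∞ := by
    obtain ⟨K, hK, hKv⟩ := lqNorm_low hq M
    refine lt_of_le_of_lt (lqNorm_mono q (d := fun k => if k < M then
      ∑ i ∈ Finset.range M, a i else 0) fun k => ?_) ((hKv _).trans_lt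
      (ENNReal.mul_lt_top hK (ENNReal.sum_lt_top.mpr fun i _ => haf i)))
    simp only [haM]
    split_ifs with hk
    · exact Finset.single_le_sum (f := a) (fun _ _ => zero_le) (Finset.mem_range.mpr hk)
    · exact le_rfl
  have h1 : ∀ k, aM k ≤ θ * (if N ≤ k then aM (k - N) else 0) + c k := by
    intro k
    simp only [haM]
    split_ifs with k1 k2 k3
    · simpa [k2] using h k
    · omega
    · simpa [k2] using h k
    all_goals simp
  have h2 : lqNorm q aM ≤ qK q * (θ * lqNorm q aM + lqNorm q c) := by
    refine (lqNorm_mono q h1).trans ((lqNorm_add_le hq _ _).trans ?_)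
    rw [lqNorm_const_mul hq]
    gcongr
    exact lqNorm_shift_le hq N aM
  have h3 : lqNorm q aM ≤ 2⁻¹ * lqNorm q aM + qK q * lqNorm q c := by
    refine h2.trans ?_
    rw [mul_add, ← mul_assoc]
    gcongr
  set x := lqNorm q aM
  have h4 : x = 2⁻¹ * x + 2⁻¹ * x := by rw [← add_mul, ENNReal.inv_two_add_inv_two, one_mul]
  have h5 : 2⁻¹ * x ≤ qK q * lqNorm q c := by
    have : 2⁻¹ * x + 2⁻¹ * x ≤ 2⁻¹ * x + qK q * lqNorm q c := by rw [← h4]; exact h3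
    exact (ENNReal.add_le_add_iff_left (ENNReal.mul_lt_top (by simp) hfin).ne).mp this
  calc x = 2⁻¹ * x + 2⁻¹ * x := h4
    _ ≤ qK q * lqNorm q c + qK q * lqNorm q c := add_le_add h5 h5
    _ = _ := by ring

lemma lpNormE_iUnion {α ι : Type*} [MeasurableSpace α] [Countable ι] (p : ℝ≥0∞)
    (μ : Measure α) {S : ι → Set α}
    (hS : ∀ i, MeasurableSet (S i)) (hd : Pairwise (Function.onFun Disjoint S)) (f : α → ℝ≥0∞) :
    lpNormE p (μ.restrict (⋃ i, S i)) f = lqNorm p (fun i => lpNormE p (μ.restrict (S i)) f) := by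
  by_cases hp : p = ∞
  · unfold lpNormE lqNorm
    simp only [if_pos hp]
    apply le_antisymm
    · refine essSup_le_of_ae_le _ ?_
      refine (ae_restrict_iUnion_iff S _).mpr fun i => ?_
      filter_upwards [ENNReal.ae_le_essSup (μ := μ.restrict (S i)) f] with x hx
      exact hx.trans (le_iSup (fun i => essSup f (μ.restrict (S i))) i)
    · refine iSup_le fun i => essSup_mono_measure' ?_
      exact Measure.restrict_mono (Set.subset_iUnion S i) le_rfl
  · unfold lpNormE lqNorm
    simp only [if_neg hp]
    by_cases h0 : p.toReal = 0
    · simp [h0]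
    rw [lintegral_iUnion hS hd]
    congr 1
    refine tsum_congr fun i => ?_
    rw [← ENNReal.rpow_mul, one_div_mul_cancel h0, ENNReal.rpow_one]

lemma lpNormE_mono_on {α : Type*} [MeasurableSpace α] (p : ℝ≥0∞) (μ : Measure α) {S : Set α}
    (hS : MeasurableSet S) {f g : α → ℝ≥0∞} (h : ∀ x ∈ S, f x ≤ g x) :
    lpNormE p (μ.restrict S) f ≤ lpNormE p (μ.restrict S) g := by
  unfold lpNormE
  split_ifs
  · refine essSup_mono_ae ?_
    exact (ae_restrict_iff' hS).mpr (ae_of_all _ h)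
  · refine ENNReal.rpow_le_rpow ?_ (by positivity)
    exact setLIntegral_mono' hS fun x hx => ENNReal.rpow_le_rpow (h x hx) ENNReal.toReal_nonneg

lemma lpNormE_mul_const {α : Type*} [MeasurableSpace α] {p : ℝ≥0∞} (hp : 0 < p) (μ : Measure α)
    {f : α → ℝ≥0∞} (hf : Measurable f) (c : ℝ≥0∞) :
    lpNormE p μ (fun x => f x * c) = lpNormE p μ f * c := by
  unfold lpNormE
  split_ifs with h
  · simp_rw [mul_comm _ c]; exact ENNReal.essSup_const_mul
  · have hq' : 0 < p.toReal := ENNReal.toReal_pos hp.ne' h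
    simp_rw [ENNReal.mul_rpow_of_nonneg _ _ hq'.le]
    rw [lintegral_mul_const _ (hf.pow_const _), ENNReal.mul_rpow_of_nonneg _ _ (by positivity),
      ← ENNReal.rpow_mul, mul_one_div_cancel hq'.ne', ENNReal.rpow_one]

lemma dyadicCube_restrict (n k : ℕ) (m : Fin n → ℤ) :
    (volume : Measure (Rn n)).restrict (dyadicCube n k m) =
      volume.restrict (dyadicCubeHalf n k m) := by
  refine Measure.restrict_congr_set ?_
  have h1 : dyadicCube n k m = Set.pi Set.univ fun i =>
      Set.Ioo ((m i : ℝ) / 2 ^ k) (((m i : ℝ) + 1) / 2 ^ k) := by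
    ext x; simp [dyadicCube]
  have h2 : dyadicCubeHalf n k m = Set.pi Set.univ fun i =>
      Set.Ico ((m i : ℝ) / 2 ^ k) (((m i : ℝ) + 1) / 2 ^ k) := by
    ext x; simp [dyadicCubeHalf]
  rw [h1, h2, volume_pi]
  exact Measure.univ_pi_Ioo_ae_eq_Icc.trans Measure.univ_pi_Ico_ae_eq_Icc.symm

lemma volume_dch (n k : ℕ) (m : Fin n → ℤ) :
    volume (dyadicCubeHalf n k m) = ((2 : ℝ≥0∞) ^ (k * n))⁻¹ := by
  have h2 : dyadicCubeHalf n k m = Set.pi Set.univ fun i =>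
      Set.Ico ((m i : ℝ) / 2 ^ k) (((m i : ℝ) + 1) / 2 ^ k) := by
    ext x; simp [dyadicCubeHalf]
  rw [h2, Real.volume_pi_Ico]
  have : ∀ i, ((m i : ℝ) + 1) / 2 ^ k - (m i : ℝ) / 2 ^ k = ((2 : ℝ) ^ k)⁻¹ := fun i => by
    field_simp; ring
  simp_rw [this]
  rw [ENNReal.ofReal_inv_of_pos (by positivity), ENNReal.ofReal_pow (by norm_num)]
  simp [pow_mul, ENNReal.inv_pow]

lemma fidx_anc {n : ℕ} (N k : ℕ) (x : Rn n) : anc N (fidx (N + k) x) = fidx k x := by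
  symm
  rw [← mem_dch_iff, mem_dch]
  intro i
  have pN : (0 : ℝ) < 2 ^ N := by positivity
  have h1 := anc_bounds N (fidx (N + k) x) i
  have h2 := Int.floor_le ((2 : ℝ) ^ (N + k) * x i)
  have h3 := Int.lt_floor_add_one ((2 : ℝ) ^ (N + k) * x i)
  have e : (fidx (N + k) x i : ℝ) = (⌊(2 : ℝ) ^ (N + k) * x i⌋ : ℝ) := rfl
  rw [e] at h1
  rw [pow_add, mul_assoc] at h2 h3 h1
  constructor
  · exact le_of_mul_le_mul_left (h1.1.trans h2) pN
  · have : (2 : ℝ) ^ N * (2 ^ k * x i) < 2 ^ N * ((anc N (fidx (N + k) x) i : ℝ) + 1) := by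
      rw [mul_add, mul_one]; linarith [h1.2, h3]
    exact lt_of_mul_lt_mul_left this pN.le

lemma dch_disjoint (n k : ℕ) : Pairwise (Function.onFun Disjoint (dyadicCubeHalf n k)) := by
  intro m m' h
  refine Set.disjoint_left.mpr fun x hx hx' => h ?_
  rw [mem_dch_iff] at hx hx'
  rw [← hx, ← hx']

lemma dch_iUnion (n k : ℕ) : (⋃ m, dyadicCubeHalf n k m) = Set.univ := by
  refine Set.eq_univ_of_forall fun x => Set.mem_iUnion.mpr ⟨fidx k x, mem_dch_iff.mpr rfl⟩

lemma dch_fiber (n N k : ℕ) (m : Fin n → ℤ) :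
    dyadicCubeHalf n k m = ⋃ m' : {m' : Fin n → ℤ // anc N m' = m},
      dyadicCubeHalf n (N + k) m'.1 := by
  ext x
  simp only [Set.mem_iUnion, mem_dch_iff]
  constructor
  · intro h; exact ⟨⟨fidx (N + k) x, by rw [fidx_anc, h]⟩, rfl⟩
  · rintro ⟨⟨m', hm'⟩, h⟩; rw [← fidx_anc N k, h, hm']

lemma tbarOf_eq {n : ℕ} {p : ℝ≥0∞} {T : ℕ → (Fin n → ℤ) → ℝ≥0∞} {k : ℕ} {m : Fin n → ℤ}
    {x : Rn n} (hx : x ∈ dyadicCubeHalf n k m) :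
    tbarOf n p T k x = (2 : ℝ≥0∞) ^ (((k * n : ℕ) : ℝ) / p.toReal) * T k m := by
  unfold tbarOf
  congr 1
  rw [tsum_eq_single m]
  · simp [hx]
  · intro m' hm'
    rw [Set.indicator_of_notMem]
    intro h
    rw [mem_dch_iff] at h hx
    exact hm' (h ▸ hx)

lemma lpNormE_tbar {n : ℕ} {p : ℝ≥0∞} (hp : 0 < p) (T : ℕ → (Fin n → ℤ) → ℝ≥0∞) (k : ℕ)
    (m : Fin n → ℤ) :
    lpNormE p (volume.restrict (dyadicCubeHalf n k m)) (tbarOf n p T k) = T k m := by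
  have h1 : lpNormE p (volume.restrict (dyadicCubeHalf n k m)) (tbarOf n p T k) =
      lpNormE p (volume.restrict (dyadicCubeHalf n k m))
        (fun _ => (2 : ℝ≥0∞) ^ (((k * n : ℕ) : ℝ) / p.toReal) * T k m) :=
    le_antisymm (lpNormE_mono_on p _ (measurableSet_dyadicCubeHalf _ _ _) fun x hx =>
      (tbarOf_eq hx).le) (lpNormE_mono_on p _ (measurableSet_dyadicCubeHalf _ _ _) fun x hx =>
      (tbarOf_eq hx).ge)
  rw [h1, lpNormE_mul_const hp _ measurable_const]
  suffices h : lpNormE p (volume.restrict (dyadicCubeHalf n k m))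
      (fun _ => (2 : ℝ≥0∞) ^ (((k * n : ℕ) : ℝ) / p.toReal)) = 1 by rw [h, one_mul]
  unfold lpNormE
  split_ifs with h
  · rw [essSup_const]
    · simp [h]
    · intro h0
      have := Measure.restrict_eq_zero.mp h0
      rw [volume_dch] at this
      simp at this
  · have hq' : 0 < p.toReal := ENNReal.toReal_pos hp.ne' h
    rw [lintegral_const, Measure.restrict_apply_univ, volume_dch, ← ENNReal.rpow_mul,
      div_mul_cancel₀ _ hq'.ne', ENNReal.rpow_natCast, ENNReal.mul_inv_cancel, ENNReal.one_rpow]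
    · simp
    · simp

lemma avgNorm_eq {n k : ℕ} {e : ℝ≥0∞} (m : Fin n → ℤ) (f : Rn n → ℝ≥0∞) :
    avgNorm n k e (dyadicCube n k m) f = ((2 : ℝ≥0∞) ^ (k * n)) ^ (1 / e.toReal) *
      lpNormE e (volume.restrict (dyadicCubeHalf n k m)) f := by
  unfold avgNorm lpNormE
  rw [dyadicCube_restrict]
  split_ifs with h
  · simp [h]
  · rw [ENNReal.mul_rpow_of_nonneg _ _ (by positivity)]

lemma weight_fiber {n : ℕ} {α₁ α₂ α₃ : ℝ} {σ₁ p : ℝ≥0∞} (hp : 0 < p)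
    {T : ℕ → (Fin n → ℤ) → ℝ≥0∞} (hT : MemXseq n α₁ α₂ α₃ σ₁ p p T)
    (hfin : ∀ k m, T k m < ∞) :
    ∃ C : ℝ≥0∞, C < ∞ ∧ ∀ N k (B : (Fin n → ℤ) → ℝ≥0∞),
      lqNorm p (fun m => T (N + k) m * B (anc N m)) ≤
        C * 2 ^ (α₂ * (N : ℝ)) * lqNorm p (fun m => T k m * B m) := by
  obtain ⟨_, ⟨C, _, hC, h⟩, h3⟩ := hT
  refine ⟨C, hC, fun N k B => lqNorm_fiber_le hp (anc N) (T (N + k)) (T k) B _ fun m => ?_⟩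
  have h1 := h k (N + k) (by omega) m
  rw [avgNorm_eq, avgNorm_eq, lpNormE_tbar hp, dch_fiber n N k m,
    lpNormE_iUnion p volume
      (S := fun m' : {m' : Fin n → ℤ // anc N m' = m} => dyadicCubeHalf n (N + k) m'.1)
      (fun _ => measurableSet_dyadicCubeHalf _ _ _)
      (fun a b hab => dch_disjoint n (N + k) (fun h => hab (Subtype.ext h)))] at h1
  simp_rw [lpNormE_tbar hp] at h1
  have e : α₂ * (((N + k : ℕ) : ℝ) - k) = α₂ * (N : ℝ) := by push_cast; ring
  rw [e] at h1
  set cK := ((2 : ℝ≥0∞) ^ (k * n)) ^ (1 / p.toReal) with hcK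
  have c0 : cK ≠ 0 := (ENNReal.rpow_pos (by positivity) (by simp)).ne'
  have ct : cK ≠ ∞ := ENNReal.rpow_ne_top_of_ne_zero (by simp) (by simp)
  have T0 : T k m ≠ 0 := (h3 k m m (by simp)).1.ne'
  set S := lqNorm p (fun i : {m' : Fin n → ℤ // anc N m' = m} => T (N + k) i.1)
  set K := C * 2 ^ (α₂ * (N : ℝ))
  have D0 : cK * T k m ≠ 0 := mul_ne_zero c0 T0
  have Dt : cK * T k m ≠ ∞ := ENNReal.mul_ne_top ct (hfin k m).ne
  have h4 : cK * S ≤ cK * (K * T k m) := by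
    calc cK * S = (cK * T k m) * ((cK * T k m)⁻¹ * (cK * S)) := by
          rw [← mul_assoc, ENNReal.mul_inv_cancel D0 Dt, one_mul]
      _ ≤ (cK * T k m) * K := mul_le_mul_right h1 _
      _ = _ := by ring
  exact (ENNReal.mul_le_mul_iff_right c0 ct).mp h4

lemma weight_near {n : ℕ} {α₃ : ℝ} {T : ℕ → (Fin n → ℤ) → ℝ≥0∞}
    (h : ∀ k : ℕ, ∀ m m' : Fin n → ℤ, (∀ i, |m i - m' i| ≤ 1) →
      0 < T k m ∧ T k m ≤ (2 : ℝ≥0∞) ^ (α₃ : ℝ) * T k m') (k R : ℕ) :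
    ∀ m m' : Fin n → ℤ, (∀ i, |m i - m' i| ≤ R) → T k m ≤ ((2 : ℝ≥0∞) ^ α₃) ^ R * T k m' := by
  induction R with
  | zero =>
    intro m m' hm
    have : m = m' := funext fun i => by
      have := hm i
      simp at this; omega
    simp [this]
  | succ R ih =>
    intro m m' hm
    set m₁ : Fin n → ℤ := fun i => m i + Int.sign (m' i - m i)
    have h1 := (h k m m₁ (fun i => by
      simp only [m₁]
      rcases lt_trichotomy (m' i - m i) 0 with hh | hh | hh
      · rw [Int.sign_eq_neg_one_of_neg hh]; simp
      · rw [hh]; simp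
      · rw [Int.sign_eq_one_of_pos hh]; simp)).2
    have h2 := ih m₁ m' (fun i => by
      have := hm i
      simp only [m₁]
      push_cast at this
      rw [abs_le] at this ⊢
      rcases lt_trichotomy (m' i - m i) 0 with hh | hh | hh
      · rw [Int.sign_eq_neg_one_of_neg hh]; constructor <;> omega
      · rw [hh]; simp; constructor <;> omega
      · rw [Int.sign_eq_one_of_pos hh]; constructor <;> omega)
    calc T k m ≤ _ := h1
      _ ≤ _ := mul_le_mul_right h2 _
      _ = _ := by rw [pow_succ]; ring

lemma weight_sum {n : ℕ} {α₃ : ℝ} {T : ℕ → (Fin n → ℤ) → ℝ≥0∞} {p : ℝ≥0∞} (hp : 0 < p)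
    (h : ∀ k : ℕ, ∀ m m' : Fin n → ℤ, (∀ i, |m i - m' i| ≤ 1) →
      0 < T k m ∧ T k m ≤ (2 : ℝ≥0∞) ^ (α₃ : ℝ) * T k m') (R : ℕ) :
    ∃ C : ℝ≥0∞, C < ∞ ∧ ∀ k (B : (Fin n → ℤ) → ℝ≥0∞),
      lqNorm p (fun m => T k m * ∑ u ∈ offs n R, B (m + u)) ≤
        C * lqNorm p (fun m => T k m * B m) := by
  refine ⟨qK p ^ (offs n R).card * ((offs n R).card * ((2 : ℝ≥0∞) ^ α₃) ^ R), ?_, ?_⟩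
  · refine ENNReal.mul_lt_top (ENNReal.pow_lt_top (qK_lt_top p)) (ENNReal.mul_lt_top (by simp)
      (ENNReal.pow_lt_top (ENNReal.rpow_ne_top_of_ne_zero (by simp) (by simp)).lt_top))
  intro k B
  simp_rw [Finset.mul_sum]
  refine (lqNorm_finsum_le hp _ (fun u m => T k m * B (m + u))).trans ?_
  rw [mul_assoc]
  refine mul_le_mul_right ?_ _
  rw [mul_assoc, ← nsmul_eq_mul]
  refine Finset.sum_le_card_nsmul _ _ _ fun u hu => ?_
  rw [mem_offs] at hu
  refine le_trans (lqNorm_mono p (d := fun m => ((2 : ℝ≥0∞) ^ α₃) ^ R * (T k (m + u) * B (m + u)))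
    fun m => ?_) ?_
  · rw [← mul_assoc]
    refine mul_le_mul_left (weight_near h k R m (m + u) fun i => ?_) _
    simpa using hu i
  · rw [lqNorm_const_mul hp]
    exact mul_le_mul_right (lqNorm_comp_le p (fun m => T k m * B m) (add_left_injective u)) _

lemma tkm_lt_top {n : ℕ} {p : ℝ≥0∞} {t : ℕ → Rn n → ℝ} (h : pAdmissible n p t) (k : ℕ)
    (m : Fin n → ℤ) : tkm n p t k m < ∞ := by
  have hK := (h k).2.2 (Set.Icc (fun i => (m i : ℝ) / 2 ^ k) (fun i => ((m i : ℝ) + 1) / 2 ^ k))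
    isCompact_Icc
  refine lt_of_le_of_lt (eLpNorm_mono_measure _ (Measure.restrict_mono ?_ le_rfl)) hK
  intro x hx
  exact ⟨fun i => (hx i).1.le, fun i => (hx i).2.le⟩

lemma tkm_eq {n : ℕ} {p : ℝ≥0∞} (hp : 0 < p) {t : ℕ → Rn n → ℝ} (h : pAdmissible n p t) (k : ℕ)
    (m : Fin n → ℤ) : tkm n p t k m =
      lpNormE p (volume.restrict (dyadicCubeHalf n k m)) (fun x => ENNReal.ofReal (t k x)) := by
  have e : ∀ x, ‖t k x‖ₑ = ENNReal.ofReal (t k x) := fun x =>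
    Real.enorm_of_nonneg ((h k).1.2 x).le
  unfold tkm lpNormE
  rw [dyadicCube_restrict]
  split_ifs with hpt
  · rw [hpt, eLpNorm_exponent_top, eLpNormEssSup]
    simp_rw [e]
  · rw [eLpNorm_eq_lintegral_rpow_enorm_toReal hp.ne' hpt]
    simp_rw [e]

/-- Discretization of a weighted norm. -/
lemma lpNormE_disc {n : ℕ} {p : ℝ≥0∞} (k : ℕ) (f : Rn n → ℝ≥0∞) :
    lpNormE p volume f =
      lqNorm p (fun m => lpNormE p (volume.restrict (dyadicCubeHalf n k m)) f) := by
  rw [← lpNormE_iUnion p volume (fun m => measurableSet_dyadicCubeHalf n k m) (dch_disjoint n k),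
    dch_iUnion, Measure.restrict_univ]

lemma disc_le {n : ℕ} {p : ℝ≥0∞} (hp : 0 < p) {t : ℕ → Rn n → ℝ} (h : pAdmissible n p t) (k : ℕ)
    (B : (Fin n → ℤ) → ℝ≥0∞) (f : Rn n → ℝ≥0∞)
    (hB : ∀ m, ∀ x ∈ dyadicCubeHalf n k m, f x ≤ B m) :
    lpNormE p volume (fun x => ENNReal.ofReal (t k x) * f x) ≤
      lqNorm p (fun m => tkm n p t k m * B m) := by
  rw [lpNormE_disc k]
  refine lqNorm_mono p fun m => ?_
  rw [tkm_eq hp h, ← lpNormE_mul_const hp _ (h k).1.1.ennreal_ofReal]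
  exact lpNormE_mono_on p _ (measurableSet_dyadicCubeHalf _ _ _) fun x hx =>
    mul_le_mul_right (hB m x hx) _

lemma le_disc {n : ℕ} {p : ℝ≥0∞} (hp : 0 < p) {t : ℕ → Rn n → ℝ} (h : pAdmissible n p t) (k : ℕ)
    (B : (Fin n → ℤ) → ℝ≥0∞) (f : Rn n → ℝ≥0∞)
    (hB : ∀ m, ∀ x ∈ dyadicCubeHalf n k m, B m ≤ f x) :
    lqNorm p (fun m => tkm n p t k m * B m) ≤
      lpNormE p volume (fun x => ENNReal.ofReal (t k x) * f x) := by
  rw [lpNormE_disc k]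
  refine lqNorm_mono p fun m => ?_
  rw [tkm_eq hp h, ← lpNormE_mul_const hp _ (h k).1.1.ennreal_ofReal]
  exact lpNormE_mono_on p _ (measurableSet_dyadicCubeHalf _ _ _) fun x hx =>
    mul_le_mul_right (hB m x hx) _

lemma dch_sub_openCube {n k : ℕ} {m : Fin n → ℤ} {x : Rn n} (hx : x ∈ dyadicCubeHalf n k m) :
    dyadicCubeHalf n k m ⊆ openCube x ((2 : ℝ) ^ (-(k : ℤ))) := by
  intro y hy i
  rw [mem_dch] at hx hy
  have h1 := hx i
  have h2 := hy i
  have pk : (0 : ℝ) < 2 ^ k := by positivity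
  rw [zpow_neg, zpow_natCast, ← one_div, lt_div_iff₀ pk, ← abs_of_pos pk, ← abs_mul, abs_lt]
  constructor <;> nlinarith

lemma openCube_sub_nbhd {n k : ℕ} {m : Fin n → ℤ} {x : Rn n} (hx : x ∈ dyadicCubeHalf n k m) :
    openCube x ((2 : ℝ) ^ (-(k : ℤ))) ⊆ nbhd k m 1 := by
  intro y hy i
  rw [mem_dch] at hx
  have h1 := hx i
  have h2 := hy i
  have pk : (0 : ℝ) < 2 ^ k := by positivity
  rw [zpow_neg, zpow_natCast, ← one_div, lt_div_iff₀ pk, ← abs_of_pos pk, ← abs_mul, abs_lt] at h2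
  push_cast
  constructor <;> nlinarith

/-- Discrete version of the level `k` term. -/
def ak (n l : ℕ) (p r : ℝ≥0∞) (t : ℕ → Rn n → ℝ) (φ : Rn n → ℝ) (k : ℕ) : ℝ≥0∞ :=
  lqNorm p (fun m => tkm n p t k m * DA n l r φ k m)

/-- Discrete version of the initial term. -/
def v0 (n : ℕ) (p r : ℝ≥0∞) (t : ℕ → Rn n → ℝ) (φ : Rn n → ℝ) : ℝ≥0∞ :=
  lqNorm p (fun m => tkm n p t 0 m * eLpNorm φ r (volume.restrict (dyadicCubeHalf n 0 m)))

/-- Continuous version of the level `k` term. -/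
def bk (n l : ℕ) (p r : ℝ≥0∞) (t : ℕ → Rn n → ℝ) (φ : Rn n → ℝ) (k : ℕ) : ℝ≥0∞ :=
  lpNormE p volume (fun x => ENNReal.ofReal (t k x) *
    deltaE n l r ((2 : ℝ) ^ (1 - (k : ℤ))) (openCube x ((2 : ℝ) ^ (-(k : ℤ)))) φ)

/-- The initial term. -/
def w0 (n : ℕ) (p r : ℝ≥0∞) (t : ℕ → Rn n → ℝ) (φ : Rn n → ℝ) : ℝ≥0∞ :=
  lpNormE p volume (fun x => ENNReal.ofReal (t 0 x) * eLpNorm φ r (volume.restrict (openCube x 1)))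

lemma tildeBnorm_eq (n l : ℕ) (p q r : ℝ≥0∞) (t : ℕ → Rn n → ℝ) (φ : Rn n → ℝ) :
    tildeBnorm n l p q r t φ = lqNorm q (fun k => bk n l p r t φ (k + 1)) + w0 n p r t φ := by
  unfold tildeBnorm tildeBnormE bk w0
  push_cast
  rfl

lemma ak_le_bk {n l : ℕ} {p r : ℝ≥0∞} (hp : 0 < p) {t : ℕ → Rn n → ℝ} (h : pAdmissible n p t)
    (φ : Rn n → ℝ) (k : ℕ) : ak n l p r t φ k ≤ bk n l p r t φ k := by
  refine le_disc hp h k _ _ fun m x hx => ?_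
  rw [deltaE_eq]
  exact mul_le_mul_right (DE_mono le_rfl (dch_sub_openCube hx)) _

lemma v0_le_w0 {n : ℕ} {p r : ℝ≥0∞} (hp : 0 < p) {t : ℕ → Rn n → ℝ} (h : pAdmissible n p t)
    (φ : Rn n → ℝ) : v0 n p r t φ ≤ w0 n p r t φ := by
  refine le_disc hp h 0 _ _ fun m x hx => ?_
  have := dch_sub_openCube hx
  exact eLpNorm_mono_measure _ (Measure.restrict_mono (by simpa using this) le_rfl)

lemma bk_le_ak {n : ℕ} {α₁ α₂ α₃ : ℝ} {σ₁ p : ℝ≥0∞} (r : ℝ≥0∞) (hp : 0 < p) {t : ℕ → Rn n → ℝ}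
    (h : MemX n α₁ α₂ α₃ σ₁ p p t) : ∃ C : ℝ≥0∞, C < ∞ ∧ ∀ l φ, Measurable φ → ∀ k,
      bk n l p r t φ k ≤ C * ak n l p r t φ k := by
  obtain ⟨C, hC, hw⟩ := weight_sum hp h.2.2.2 1
  refine ⟨covK n r 1 * C, ENNReal.mul_lt_top (covK_lt_top _ _ _) hC, fun l φ hφ k => ?_⟩
  refine (disc_le hp h.1 k (fun m => covK n r 1 * ∑ u ∈ offs n 1, DA n l r φ k (m + u)) _
    fun m x hx => ?_).trans ?_
  · rw [deltaE_eq]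
    exact DE_cover hφ le_rfl (openCube_sub_nbhd hx)
  · simp_rw [mul_left_comm _ (covK n r 1)]
    rw [lqNorm_const_mul hp, mul_assoc]
    exact mul_le_mul_right (hw k _) _

lemma w0_le_v0 {n : ℕ} {α₁ α₂ α₃ : ℝ} {σ₁ p : ℝ≥0∞} (r : ℝ≥0∞) (hp : 0 < p) {t : ℕ → Rn n → ℝ}
    (h : MemX n α₁ α₂ α₃ σ₁ p p t) : ∃ C : ℝ≥0∞, C < ∞ ∧ ∀ φ, Measurable φ →
      w0 n p r t φ ≤ C * v0 n p r t φ := by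
  obtain ⟨C, hC, hw⟩ := weight_sum hp h.2.2.2 1
  refine ⟨covK n r 1 * C, ENNReal.mul_lt_top (covK_lt_top _ _ _) hC, fun φ hφ => ?_⟩
  refine (disc_le hp h.1 0 (fun m => covK n r 1 * ∑ u ∈ offs n 1,
    eLpNorm φ r (volume.restrict (dyadicCubeHalf n 0 (m + u)))) _
    fun m x hx => ?_).trans ?_
  · exact V_cover hφ (by simpa using openCube_sub_nbhd hx)
  · simp_rw [mul_left_comm _ (covK n r 1)]
    rw [lqNorm_const_mul hp, mul_assoc]
    exact mul_le_mul_right (hw 0 (fun m => eLpNorm φ r (volume.restrict (dyadicCubeHalf n 0 m)))) _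

lemma easy_ak {n : ℕ} {α₁ α₂ α₃ : ℝ} {σ₁ p : ℝ≥0∞} (l : ℕ) (r : ℝ≥0∞) (hp : 0 < p)
    {t : ℕ → Rn n → ℝ} (h : MemX n α₁ α₂ α₃ σ₁ p p t) :
    ∃ C : ℝ≥0∞, C < ∞ ∧ ∀ φ, Measurable φ → ∀ k,
      ak n (l + 1) p r t φ k ≤ C * ak n l p r t φ k := by
  obtain ⟨C, hC, hw⟩ := weight_sum hp h.2.2.2 2
  obtain ⟨D, hD, he⟩ := easy_step n l r
  refine ⟨D * C, ENNReal.mul_lt_top hD hC, fun φ hφ k => ?_⟩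
  refine (lqNorm_mono p fun m => mul_le_mul_right (he φ hφ k m) _).trans ?_
  simp_rw [mul_left_comm _ D]
  rw [lqNorm_const_mul hp, mul_assoc]
  exact mul_le_mul_right (hw k _) _

/-- Weighted descent to a coarser level. -/
lemma descend {n : ℕ} {α₁ α₂ α₃ : ℝ} {σ₁ p : ℝ≥0∞} (hp : 0 < p)
    {t : ℕ → Rn n → ℝ} (h : MemX n α₁ α₂ α₃ σ₁ p p t) (R : ℕ) :
    ∃ C : ℝ≥0∞, C < ∞ ∧ ∀ N k (B : (Fin n → ℤ) → ℝ≥0∞),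
      lqNorm p (fun m => tkm n p t (N + k) m * ∑ u ∈ offs n R, B (anc N m + u)) ≤
        C * 2 ^ (α₂ * (N : ℝ)) * lqNorm p (fun m => tkm n p t k m * B m) := by
  obtain ⟨C, hC, hw⟩ := weight_sum hp h.2.2.2 R
  obtain ⟨D, hD, hf⟩ := weight_fiber hp h.2 (tkm_lt_top h.1)
  refine ⟨D * C, ENNReal.mul_lt_top hD hC, fun N k B => ?_⟩
  refine (hf N k (fun m => ∑ u ∈ offs n R, B (m + u))).trans ?_
  calc _ ≤ D * 2 ^ (α₂ * (N : ℝ)) * (C * lqNorm p (fun m => tkm n p t k m * B m)) :=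
        mul_le_mul_right (hw k B) _
    _ = _ := by ring

lemma low_ak {n : ℕ} {α₁ α₂ α₃ : ℝ} {σ₁ p : ℝ≥0∞} (l : ℕ) (r : ℝ≥0∞) (hp : 0 < p)
    {t : ℕ → Rn n → ℝ} (h : MemX n α₁ α₂ α₃ σ₁ p p t) (k : ℕ) :
    ∃ C : ℝ≥0∞, C < ∞ ∧ ∀ φ, Measurable φ → ak n l p r t φ k ≤ C * v0 n p r t φ := by
  obtain ⟨C, hC, hw⟩ := descend hp h (2 * l)
  obtain ⟨D, hD, he⟩ := low_level n l r k
  refine ⟨D * (C * 2 ^ (α₂ * (k : ℝ))), ENNReal.mul_lt_top hD (ENNReal.mul_lt_top hC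
    (ENNReal.rpow_ne_top_of_ne_zero (by simp) (by simp)).lt_top), fun φ hφ => ?_⟩
  refine (lqNorm_mono p fun m => mul_le_mul_right (he φ hφ m) _).trans ?_
  simp_rw [mul_left_comm _ D]
  rw [lqNorm_const_mul hp, mul_assoc]
  exact mul_le_mul_right
    (hw k 0 (fun m => eLpNorm φ r (volume.restrict (dyadicCubeHalf n 0 m)))) _

lemma low_ak' {n : ℕ} {α₁ α₂ α₃ : ℝ} {σ₁ p : ℝ≥0∞} (l : ℕ) (r : ℝ≥0∞) (hp : 0 < p)
    {t : ℕ → Rn n → ℝ} (h : MemX n α₁ α₂ α₃ σ₁ p p t) (L : ℕ) :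
    ∃ C : ℝ≥0∞, C < ∞ ∧ ∀ φ, Measurable φ → ∀ k < L, ak n l p r t φ (k + 1) ≤ C * v0 n p r t φ := by
  choose C hC hk using fun k => low_ak l r hp h (k + 1)
  refine ⟨∑ k ∈ Finset.range L, C k, ENNReal.sum_lt_top.mpr fun k _ => hC k, fun φ hφ k hkL => ?_⟩
  refine (hk k φ hφ).trans (mul_le_mul_left ?_ _)
  exact Finset.single_le_sum (f := C) (fun _ _ => by simp) (Finset.mem_range.mpr hkL)

lemma exists_theta {α₂ : ℝ} {l : ℕ} (hl : α₂ < l) {K : ℝ≥0∞} (hK : K < ∞) :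
    ∃ N : ℕ, 0 < N ∧ K * (ENNReal.ofReal (((2 : ℝ)⁻¹ ^ l) ^ N) * 2 ^ (α₂ * (N : ℝ))) ≤ 2⁻¹ := by
  have e : ∀ N : ℕ, ENNReal.ofReal (((2 : ℝ)⁻¹ ^ l) ^ N) * 2 ^ (α₂ * (N : ℝ)) =
      ((2 : ℝ≥0∞) ^ (α₂ - l)) ^ N := fun N => by
    rw [ENNReal.rpow_mul, ENNReal.rpow_natCast, ENNReal.ofReal_pow (by positivity), ← mul_pow,
      ENNReal.rpow_sub _ _ (by simp) (by simp), ENNReal.rpow_natCast,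
      ENNReal.ofReal_pow (by positivity), ENNReal.ofReal_inv_of_pos (by norm_num), mul_comm]
    simp [div_eq_mul_inv, ENNReal.inv_pow]
  have hlt : (2 : ℝ≥0∞) ^ (α₂ - l) < 1 :=
    ENNReal.rpow_lt_one_of_one_lt_of_neg (by norm_num) (by linarith)
  have h1 := ENNReal.Tendsto.const_mul (a := K)
    (ENNReal.tendsto_pow_atTop_nhds_zero_of_lt_one hlt) (Or.inr hK.ne)
  rw [mul_zero] at h1
  have h2 := (h1.eventually (ge_mem_nhds (show (0 : ℝ≥0∞) < 2⁻¹ by simp))).and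
    (eventually_gt_atTop 0)
  obtain ⟨N, hN, hN0⟩ := h2.exists
  exact ⟨N, hN0, by rw [e]; exact hN⟩

lemma hard_ak {n : ℕ} {α₁ α₂ α₃ : ℝ} {σ₁ p : ℝ≥0∞} (l : ℕ) (hl : α₂ < l) (q r : ℝ≥0∞) (hp : 0 < p)
    (hq : 0 < q) {t : ℕ → Rn n → ℝ} (h : MemX n α₁ α₂ α₃ σ₁ p p t) :
    ∃ C : ℝ≥0∞, C < ∞ ∧ ∀ φ, Measurable φ →
      lqNorm q (fun k => ak n l p r t φ (k + 1)) ≤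
        C * (lqNorm q (fun k => ak n (l + 1) p r t φ (k + 1)) + v0 n p r t φ) := by
  obtain ⟨D1, hD1, h1⟩ := descend hp h 1
  obtain ⟨D2, hD2, h2⟩ := descend hp h 2
  set C₀ := LpAddConst r * covK n r 2 with hC₀
  have hC₀t : C₀ < ∞ := ENNReal.mul_lt_top (LpAddConst_lt_top r) (covK_lt_top _ _ _)
  obtain ⟨N, hN, hθ⟩ := exists_theta hl (K := qK q * (qK p * C₀ * D2))
    (ENNReal.mul_lt_top (qK_lt_top q) (ENNReal.mul_lt_top (ENNReal.mul_lt_top (qK_lt_top p) hC₀t)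
      hD2))
  obtain ⟨C, hC, L, hNL, hs⟩ := one_step n l r N
  obtain ⟨E, hE, hlow⟩ := low_ak' l r hp h L
  obtain ⟨K, hK, hKl⟩ := lqNorm_low hq L
  set ρ := ENNReal.ofReal (((2 : ℝ)⁻¹ ^ l) ^ N) with hρ
  set A := qK p * C * (D1 * 2 ^ (α₂ * (L : ℝ))) with hA
  have hAt : A < ∞ := ENNReal.mul_lt_top (ENNReal.mul_lt_top (qK_lt_top p) hC)
    (ENNReal.mul_lt_top hD1 (ENNReal.rpow_ne_top_of_ne_zero (by simp) (by simp)).lt_top)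
  refine ⟨2 * qK q * (qK q * (A + E * K)), ?_, fun φ hφ => ?_⟩
  · exact ENNReal.mul_lt_top (ENNReal.mul_lt_top (by simp) (qK_lt_top q))
      (ENNReal.mul_lt_top (qK_lt_top q) (ENNReal.add_lt_top.mpr ⟨hAt, ENNReal.mul_lt_top hE hK⟩))
  set a := fun k => ak n l p r t φ (k + 1) with ha
  set b := fun k => ak n (l + 1) p r t φ (k + 1) with hb
  set v := v0 n p r t φ with hv
  have main := absorb hq a (fun k => A * (if L ≤ k then b (k - L) else 0) +
    E * (if k < L then v else 0)) (qK p * C₀ * D2 * (ρ * 2 ^ (α₂ * (N : ℝ)))) N hN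
    (by rw [← mul_assoc]; exact hθ) ?_
  · refine main.trans ?_
    rw [mul_assoc (2 * qK q)]
    refine mul_le_mul_right ?_ _
    refine (lqNorm_add_le hq _ _).trans ?_
    rw [mul_assoc]
    refine mul_le_mul_right ?_ _
    rw [lqNorm_const_mul hq, lqNorm_const_mul hq]
    calc _ ≤ A * lqNorm q b + E * (K * v) :=
          add_le_add (mul_le_mul_right (lqNorm_shift_le hq L b) _) (mul_le_mul_right (hKl v) _)
      _ ≤ A * lqNorm q b + E * (K * v) + (A * v + E * K * lqNorm q b) := le_self_add
      _ = _ := by ring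
  · intro k
    by_cases hk : k < L
    · simp only [if_pos hk]
      exact (hlow φ hφ k hk).trans (le_add_left (le_add_left le_rfl))
    · have hLk : L ≤ k := not_lt.mp hk
      simp only [if_neg hk, if_pos hLk, if_pos (hNL.trans hLk), mul_zero, add_zero]
      have g2 := h2 N (k - N + 1) (DA n l r φ (k - N + 1))
      have g1 := h1 L (k - L + 1) (DA n (l + 1) r φ (k - L + 1))
      rw [show N + (k - N + 1) = k + 1 by omega] at g2
      rw [show L + (k - L + 1) = k + 1 by omega] at g1
      have s := hs φ hφ (k + 1) (by omega)
      rw [show k + 1 - N = k - N + 1 by omega, show k + 1 - L = k - L + 1 by omega] at s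
      calc a k ≤ lqNorm p (fun m => C₀ * ρ * (tkm n p t (k + 1) m *
            ∑ u ∈ offs n 2, DA n l r φ (k - N + 1) (anc N m + u)) +
            C * (tkm n p t (k + 1) m *
              ∑ u ∈ offs n 1, DA n (l + 1) r φ (k - L + 1) (anc L m + u))) := by
            refine lqNorm_mono p fun m => (mul_le_mul_right (s m) _).trans (le_of_eq ?_)
            ring
        _ ≤ _ := lqNorm_add_le hp _ _
        _ = qK p * (C₀ * ρ * lqNorm p (fun m => tkm n p t (k + 1) m *
            ∑ u ∈ offs n 2, DA n l r φ (k - N + 1) (anc N m + u)) +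
            C * lqNorm p (fun m => tkm n p t (k + 1) m *
              ∑ u ∈ offs n 1, DA n (l + 1) r φ (k - L + 1) (anc L m + u))) := by
            rw [lqNorm_const_mul hp, lqNorm_const_mul hp]
        _ ≤ qK p * (C₀ * ρ * (D2 * 2 ^ (α₂ * (N : ℝ)) * a (k - N)) +
            C * (D1 * 2 ^ (α₂ * (L : ℝ)) * b (k - L))) :=
            mul_le_mul_right (add_le_add (mul_le_mul_right g2 _) (mul_le_mul_right g1 _)) _
        _ = _ := by rw [hA]; ring

lemma norm_step {n : ℕ} {α₁ α₂ α₃ : ℝ} {σ₁ p : ℝ≥0∞} (l : ℕ) (hl : α₂ < l) (q r : ℝ≥0∞)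
    (hp : 0 < p) (hq : 0 < q) {t : ℕ → Rn n → ℝ} (h : MemX n α₁ α₂ α₃ σ₁ p p t) :
    ∃ C : ℝ≥0∞, C < ∞ ∧ ∀ φ, Measurable φ →
      tildeBnorm n l p q r t φ ≤ C * tildeBnorm n (l + 1) p q r t φ ∧
      tildeBnorm n (l + 1) p q r t φ ≤ C * tildeBnorm n l p q r t φ := by
  obtain ⟨A, hA, hAk⟩ := bk_le_ak r hp h
  obtain ⟨E, hE, hEk⟩ := easy_ak l r hp h
  obtain ⟨C, hC, hCk⟩ := hard_ak l hl q r hp hq h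
  refine ⟨A * C + 1 + A * E, ENNReal.add_lt_top.mpr ⟨ENNReal.add_lt_top.mpr
    ⟨ENNReal.mul_lt_top hA hC, by simp⟩, ENNReal.mul_lt_top hA hE⟩, fun φ hφ => ?_⟩
  simp only [tildeBnorm_eq]
  set w := w0 n p r t φ
  have hb : ∀ j, lqNorm q (fun k => bk n j p r t φ (k + 1)) ≤
      A * lqNorm q (fun k => ak n j p r t φ (k + 1)) := fun j => by
    rw [← lqNorm_const_mul hq]
    exact lqNorm_mono q fun k => hAk j φ hφ (k + 1)
  have ha : ∀ j, lqNorm q (fun k => ak n j p r t φ (k + 1)) ≤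
      lqNorm q (fun k => bk n j p r t φ (k + 1)) := fun j =>
    lqNorm_mono q fun k => ak_le_bk hp h.1 φ (k + 1)
  set x := lqNorm q (fun k => bk n l p r t φ (k + 1))
  set y := lqNorm q (fun k => bk n (l + 1) p r t φ (k + 1))
  constructor
  · have h1 : x ≤ A * (C * (y + w)) := (hb l).trans (mul_le_mul_right ((hCk φ hφ).trans
      (mul_le_mul_right (add_le_add (ha (l + 1)) (v0_le_w0 hp h.1 φ)) _)) _)
    calc x + w ≤ A * (C * (y + w)) + w := add_le_add_left h1 w
      _ ≤ A * (C * (y + w)) + w + (y + A * E * (y + w)) := le_self_add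
      _ = _ := by ring
  · have h1 : y ≤ A * (E * x) := by
      refine (hb (l + 1)).trans (mul_le_mul_right ?_ _)
      refine le_trans ?_ (mul_le_mul_right (ha l) E)
      rw [← lqNorm_const_mul hq]
      exact lqNorm_mono q fun k => hEk φ hφ (k + 1)
    calc y + w ≤ A * (E * x) + w := add_le_add_left h1 w
      _ ≤ A * (E * x) + w + (A * C * (x + w) + x + A * E * w) := le_self_add
      _ = _ := by ring

lemma norm_multi {n : ℕ} {α₁ α₂ α₃ : ℝ} {σ₁ p : ℝ≥0∞} (l : ℕ) (hl : α₂ < l) (q r : ℝ≥0∞)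
    (hp : 0 < p) (hq : 0 < q) {t : ℕ → Rn n → ℝ} (h : MemX n α₁ α₂ α₃ σ₁ p p t) (j : ℕ) :
    ∃ C : ℝ≥0∞, C < ∞ ∧ ∀ φ, Measurable φ →
      tildeBnorm n l p q r t φ ≤ C * tildeBnorm n (l + j) p q r t φ ∧
      tildeBnorm n (l + j) p q r t φ ≤ C * tildeBnorm n l p q r t φ := by
  induction j with
  | zero => exact ⟨1, by simp, fun φ _ => by simp⟩
  | succ j ih =>
    obtain ⟨C, hC, h1⟩ := ih
    obtain ⟨D, hD, h2⟩ := norm_step (l + j) (by push_cast; have : (0 : ℝ) ≤ j := by positivity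
                                                linarith) q r hp hq h
    refine ⟨C * D, ENNReal.mul_lt_top hC hD, fun φ hφ => ?_⟩
    obtain ⟨a1, a2⟩ := h1 φ hφ
    obtain ⟨b1, b2⟩ := h2 φ hφ
    rw [← add_assoc]
    constructor
    · rw [mul_assoc]; exact a1.trans (mul_le_mul_right b1 _)
    · rw [mul_comm C, mul_assoc]; exact b2.trans (mul_le_mul_right a2 _)

/-- **Corollary 4.3: independence of the quasinorm of `B̃^l_{p,q,r}(ℝⁿ,{t_k})` of the
difference order `l`, for `l > α₂`.** -/
theorem norm_indep_of_order (n : ℕ) (hn : 0 < n) (p q r : ℝ≥0∞)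
    (hp : 0 < p) (hq : 0 < q) (hr : 0 < r)
    (α₁ α₂ α₃ : ℝ) (hα₃ : 0 ≤ α₃) (σ₁ : ℝ≥0∞) (hσ₁ : 0 < σ₁)
    (t : ℕ → Rn n → ℝ) (ht : MemX n α₁ α₂ α₃ σ₁ p p t)
    (l l' : ℕ) (hl0 : 0 < l) (hl : α₂ < l) (hll' : l < l') :
    ∃ C₁ C₂ : ℝ≥0∞, 0 < C₁ ∧ C₁ < ∞ ∧ 0 < C₂ ∧ C₂ < ∞ ∧
      ∀ φ : Rn n → ℝ, MemLrLoc n r φ →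
        C₁ * tildeBnorm n l p q r t φ ≤ tildeBnorm n l' p q r t φ ∧
        tildeBnorm n l' p q r t φ ≤ C₂ * tildeBnorm n l p q r t φ ∧
        (MemTildeB n l p q r t φ ↔ MemTildeB n l' p q r t φ) := by
  obtain ⟨j, rfl⟩ := Nat.exists_eq_add_of_lt hll'
  obtain ⟨C, hC, h⟩ := norm_multi l hl q r hp hq ht (j + 1)
  have hD : C + 1 < ∞ := ENNReal.add_lt_top.mpr ⟨hC, by simp⟩
  have hD0 : C + 1 ≠ 0 := by simp
  refine ⟨(C + 1)⁻¹, C + 1, ENNReal.inv_pos.mpr hD.ne, by simp, by simp, hD, fun φ hφ => ?_⟩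
  obtain ⟨h1, h2⟩ := h φ hφ.1
  rw [← add_assoc] at h1 h2
  have hCD : C ≤ C + 1 := le_self_add
  refine ⟨?_, h2.trans (mul_le_mul_left hCD _), ?_⟩
  · rw [ENNReal.inv_mul_le_iff hD0 hD.ne]
    exact h1.trans (mul_le_mul_left hCD _)
  · unfold MemTildeB
    exact and_congr_right fun _ => ⟨fun hh => h2.trans_lt (ENNReal.mul_lt_top hC hh),
      fun hh => h1.trans_lt (ENNReal.mul_lt_top hC hh)⟩

end
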